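/- Let (ΛV,d) be a formal elliptic minimal Sullivan algebra over Q. Then dim_Q H^*(ΛV,d) ≥ 2^{dim V^odd − dim V^even}. (Since for a nilpotent space X the toral rank rk_0(X) is at most −χ_π(X) = dim V^odd − dim V^even, this yields the toral rank conjecture for formal elliptic spaces.) -/

import Mathlib

/-!
Commutative differential graded algebras over `ℚ`, (minimal) Sullivan algebras,
ellipticity and formality; cf. Amann–Zoller, "On the toral rank conjecture and
some consequences of new variants of formality".
-/

/-- A non-negatively graded commutative (in the graded sense) differential
graded algebra over `ℚ`. -/
structure CDGA : Type 1 where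
  carrier : Type
  [ringStr : Ring carrier]
  [algStr : Algebra ℚ carrier]
  /-- The grading, by `ℚ`-subspaces. -/
  grading : ℤ → Submodule ℚ carrier
  /-- The grading is an internal direct sum decomposition. -/
  internal : DirectSum.IsInternal grading
  one_mem : (1 : carrier) ∈ grading 0
  mul_mem : ∀ {i j : ℤ} {a b : carrier}, a ∈ grading i → b ∈ grading j → a * b ∈ grading (i + j)
  /-- Graded commutativity (Koszul signs). -/
  gcomm : ∀ {i j : ℤ} {a b : carrier}, a ∈ grading i → b ∈ grading j →
      a * b = ((-1 : ℚ) ^ (i * j)) • (b * a)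
  /-- Non-negative grading. -/
  nonneg : ∀ i : ℤ, i < 0 → grading i = ⊥
  /-- The differential. -/
  d : carrier →ₗ[ℚ] carrier
  d_mem : ∀ {i : ℤ} {a : carrier}, a ∈ grading i → d a ∈ grading (i + 1)
  d_sq : ∀ a : carrier, d (d a) = 0
  /-- Graded Leibniz rule. -/
  leibniz : ∀ {i : ℤ} {a : carrier}, a ∈ grading i → ∀ b : carrier,
      d (a * b) = d a * b + ((-1 : ℚ) ^ i) • (a * d b)

attribute [instance] CDGA.ringStr CDGA.algStr

/-- The cohomology of a cdga, as a `ℚ`-vector space. -/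
abbrev CDGA.Hspace (A : CDGA) : Type :=
  ↥(LinearMap.ker A.d) ⧸ ((LinearMap.range A.d).comap (LinearMap.ker A.d).subtype)

/-- The degree-`n` cocycles of a cdga, inside the cocycle subspace. -/
def CDGA.cocyclesAt (A : CDGA) (n : ℤ) : Submodule ℚ ↥(LinearMap.ker A.d) :=
  (A.grading n).comap (LinearMap.ker A.d).subtype

/-- The degree-`n` part of the cohomology of a cdga. -/
def CDGA.Hpiece (A : CDGA) (n : ℤ) : Submodule ℚ A.Hspace :=
  (A.cocyclesAt n).map ((LinearMap.range A.d).comap (LinearMap.ker A.d).subtype).mkQ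

/-- A morphism of cdgas: a degree-preserving algebra map commuting with the
differentials. -/
structure CDGAHom (A B : CDGA) where
  toFun : A.carrier →ₐ[ℚ] B.carrier
  map_grading : ∀ i : ℤ, ∀ x ∈ A.grading i, toFun x ∈ B.grading i
  comm_d : ∀ x : A.carrier, toFun (A.d x) = B.d (toFun x)

/-- A morphism of cdgas is a quasi-isomorphism if it induces a bijection on
cohomology. -/
def CDGAHom.IsQuasiIso {A B : CDGA} (f : CDGAHom A B) : Prop :=
  (∀ x : A.carrier, A.d x = 0 → f.toFun x ∈ LinearMap.range B.d →
      x ∈ LinearMap.range A.d) ∧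
  (∀ y : B.carrier, B.d y = 0 → ∃ x : A.carrier, A.d x = 0 ∧
      f.toFun x - y ∈ LinearMap.range B.d)

/-- Two cdgas are connected by a chain (zigzag) of cdga quasi-isomorphisms. -/
def CDGAConnected (A B : CDGA) : Prop :=
  Relation.EqvGen (fun X Y : CDGA => ∃ f : CDGAHom X Y, f.IsQuasiIso) A B

/-- A cdga is formal if it is connected to its cohomology algebra, equipped
with the zero differential, by a chain of cdga quasi-isomorphisms; equivalently
(as stated here), it is connected by a chain of cdga quasi-isomorphisms to a
cdga with zero differential. -/
def CDGA.IsFormal (A : CDGA) : Prop :=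
  ∃ B : CDGA, B.d = 0 ∧ CDGAConnected A B

/-- The monomial `∏ g x ^ e x` associated with a finitely supported exponent
function `e`, the product being taken in increasing order of the (linearly
ordered) index set. -/
def monomialIn {A : Type} [Ring A] {ι : Type} (lo : LinearOrder ι)
    (g : ι → A) (e : ι →₀ ℕ) : A :=
  letI := lo
  ((e.support.sort (· ≤ ·)).map fun x => g x ^ e x).prod

/-- A Sullivan algebra `(ΛV, d)`: the free graded-commutative algebra on a
simply connected graded vector space `V = V^{≥2}` of finite type.  Freeness is
expressed by the requirement that the admissible monomials (square-free in the
odd-degree generators) in a homogeneous basis of `V` form a `ℚ`-basis. -/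
structure SullivanAlgebra extends CDGA where
  /-- The space of generators, as a graded subspace. -/
  V : ℤ → Submodule ℚ carrier
  V_le : ∀ i : ℤ, V i ≤ grading i
  /-- Simple connectedness: `V = V^{≥2}`. -/
  V_lower : ∀ i : ℤ, i ≤ 1 → V i = ⊥
  /-- Finite type. -/
  V_findim : ∀ i : ℤ, FiniteDimensional ℚ ↥(V i)
  /-- `ΛV` is free graded-commutative on `V`. -/
  free : ∃ (ι : Type) (lo : LinearOrder ι) (deg : ι → ℤ) (g : ι → carrier),
    (∀ x : ι, g x ∈ V (deg x)) ∧
    (∀ i : ℤ, V i = Submodule.span ℚ (g '' {x : ι | deg x = i})) ∧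
    LinearIndependent ℚ
      (fun e : {e : ι →₀ ℕ // ∀ x : ι, Odd (deg x) → e x ≤ 1} =>
        monomialIn lo g e.1) ∧
    ⊤ ≤ Submodule.span ℚ
      (Set.range fun e : {e : ι →₀ ℕ // ∀ x : ι, Odd (deg x) → e x ≤ 1} =>
        monomialIn lo g e.1)

/-- The set of homogeneous elements of positive degree. -/
def CDGA.posSet (A : CDGA) : Set A.carrier :=
  {a : A.carrier | ∃ i : ℤ, 0 < i ∧ a ∈ A.grading i}

/-- The decomposable elements `Λ^{≥2}V = A⁺ · A⁺` of a connected cdga. -/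
def CDGA.decomposables (A : CDGA) : Submodule ℚ A.carrier :=
  Submodule.span ℚ
    {z : A.carrier | ∃ x ∈ A.posSet, ∃ y ∈ A.posSet, z = x * y}

/-- A Sullivan algebra is minimal if `d(V) ⊆ Λ^{≥2}V`. -/
def SullivanAlgebra.IsMinimal (A : SullivanAlgebra) : Prop :=
  ∀ i : ℤ, ∀ v ∈ A.V i, A.d v ∈ A.toCDGA.decomposables

/-- A Sullivan algebra is elliptic if both `V` and `H^*(ΛV, d)` are
finite-dimensional. -/
def SullivanAlgebra.Elliptic (A : SullivanAlgebra) : Prop :=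
  (∃ N : ℤ, ∀ i : ℤ, N ≤ i → A.V i = ⊥) ∧
  FiniteDimensional ℚ A.toCDGA.Hspace

/-- The total dimension of the odd-degree part of `V`. -/
noncomputable def SullivanAlgebra.oddDim (A : SullivanAlgebra) : ℕ :=
  finsum fun i : ℤ => if Odd i then Module.finrank ℚ ↥(A.V i) else 0

/-- The total dimension of the even-degree part of `V`. -/
noncomputable def SullivanAlgebra.evenDim (A : SullivanAlgebra) : ℕ :=
  finsum fun i : ℤ => if Even i then Module.finrank ℚ ↥(A.V i) else 0

/-!
Write `A` for the algebra. Since `A` is minimal, it lifts through surjective quasi-isomorphisms,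
and up to homotopy through all of them, so formality yields a quasi-isomorphism `φ : A → B` onto a
cdga with zero differential, and an endomorphism `α` of `A` that lifts the automorphism acting on
`Bⁿ` as multiplication by `2ⁿ`. The generalized eigenspaces of `α` for the eigenvalues `2ʷ` are a
multiplicative grading by a *weight* `w` which `d` preserves. The cohomology of the part of weight
`v` sits in degree `v`, and `A` is freely generated by bihomogeneous elements of positive weights.

Computing the Euler characteristic of each weight piece from monomials and from cohomology gives
`F * ∏ (1 - t ^ w x) = ∏ (1 - t ^ w y)`, where `F = ∑ (-1) ^ v * dim Hᵛ * t ^ v` and `x`, `y` run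
over the generators of even and odd degree. Hence `(1 - t) ^ (dim V^odd - dim V^even)` divides the
polynomial `F` over `ℤ`, and `F(-1)` is the total dimension of the cohomology.
-/

section KoszulSigns

variable {ι R : Type} [Ring R] [Algebra ℚ R] {deg : ι → ℤ}

/-- A family of elements that commute up to the Koszul signs of the prescribed degrees. -/
def KoszulCommute (deg : ι → ℤ) (h : ι → R) : Prop :=
  ∀ x y, h x * h y = ((-1 : ℚ) ^ (deg x * deg y)) • (h y * h x)

theorem mul_pow_of_mul_eq_smul_mul {a b : R} {c : ℚ} (hab : a * b = c • (b * a)) (k : ℕ) :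
    a * b ^ k = c ^ k • (b ^ k * a) := by
  induction k with
  | zero => simp
  | succ k ih =>
    rw [pow_succ, ← mul_assoc, ih, smul_mul_assoc, mul_assoc, hab, mul_smul_comm, smul_smul,
      ← mul_assoc, pow_succ]

theorem KoszulCommute.mul_self_eq_zero {h : ι → R} (hh : KoszulCommute deg h) {x : ι}
    (hx : Odd (deg x)) : h x * h x = 0 := by
  have hneg := hh x x
  rw [(hx.mul hx).neg_one_zpow, neg_one_smul] at hneg
  have : IsAddTorsionFree R := .of_module_rat R
  exact self_eq_neg.1 hneg

theorem exists_mul_prod_map_eq_smul (deg : ι → ℤ) (x : ι) (e : ι →₀ ℕ) (l : List ι)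
    (hl : l.Nodup) (hx : x ∈ l) :
    ∃ c : ℚ, ∀ {R : Type} [Ring R] [Algebra ℚ R] (h : ι → R), KoszulCommute deg h →
      h x * (l.map fun y => h y ^ e y).prod =
        c • (l.map fun y => h y ^ (e + Finsupp.single x 1 : ι →₀ ℕ) y).prod := by
  induction l with
  | nil => simp at hx
  | cons y l ih =>
    rw [List.nodup_cons] at hl
    rcases eq_or_ne y x with rfl | hyx
    · refine ⟨1, fun h _ => ?_⟩
      have hl' : l.map (fun z => h z ^ (e + Finsupp.single y 1 : ι →₀ ℕ) z) =
          l.map fun z => h z ^ e z :=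
        List.map_congr_left fun z hz => by
          simp [Finsupp.single_eq_of_ne (ne_of_mem_of_not_mem hz hl.1)]
      rw [List.map_cons, List.map_cons, List.prod_cons, List.prod_cons, hl']
      simp [pow_succ', mul_assoc]
    · obtain ⟨c, hc⟩ := ih hl.2 ((List.mem_cons.1 hx).resolve_left hyx.symm)
      refine ⟨((-1) ^ (deg x * deg y)) ^ e y * c, fun h hh => ?_⟩
      rw [List.map_cons, List.prod_cons, ← mul_assoc, mul_pow_of_mul_eq_smul_mul (hh x y),
        smul_mul_assoc, mul_assoc, hc h hh]
      simp [Finsupp.single_eq_of_ne hyx, smul_smul]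

end KoszulSigns

section OrderedMonomials

variable {ι : Type} [lo : LinearOrder ι] {R : Type} [Ring R]

theorem monomialIn_zero (h : ι → R) : monomialIn lo h 0 = 1 := by
  simp [monomialIn]

theorem monomialIn_single_one (h : ι → R) (x : ι) :
    monomialIn lo h (Finsupp.single x 1) = h x := by
  simp [monomialIn]

theorem monomialIn_eq_prod_sort (h : ι → R) {e : ι →₀ ℕ} {s : Finset ι} (hs : e.support ⊆ s) :
    monomialIn lo h e = ((s.sort (· ≤ ·)).map fun x => h x ^ e x).prod := by
  have hfilter : e.support.sort (· ≤ ·) = (s.sort (· ≤ ·)).filter (· ∈ e.support) := by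
    refine List.Perm.eq_of_pairwise' (Finset.pairwise_sort _ _)
      ((Finset.pairwise_sort _ _).filter _) ?_
    rw [List.perm_ext_iff_of_nodup (Finset.sort_nodup _ _) ((Finset.sort_nodup _ _).filter _)]
    intro x
    simpa using fun hx => hs (Finsupp.mem_support_iff.2 hx)
  rw [monomialIn, hfilter]
  induction s.sort (· ≤ ·) with
  | nil => simp
  | cons x l ih => by_cases hx : x ∈ e.support <;> simp_all

theorem exists_prod_map_eq_monomialIn (e : ι →₀ ℕ) :
    ∃ L : List ι, ∀ {R : Type} [Ring R] (h : ι → R), monomialIn lo h e = (L.map h).prod := by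
  refine ⟨(e.support.sort (· ≤ ·)).flatMap fun x => List.replicate (e x) x, fun h => ?_⟩
  rw [monomialIn]
  induction e.support.sort (· ≤ ·) with
  | nil => rfl
  | cons x l ih => simp [ih]

theorem monomialIn_mem_graded [Algebra ℚ R] {M : Type} [AddCommMonoid M] (Z : M → Submodule ℚ R)
    [SetLike.GradedMonoid Z] {deg : ι → M} {h : ι → R} (hh : ∀ x, h x ∈ Z (deg x))
    (e : ι →₀ ℕ) : monomialIn lo h e ∈ Z (Finsupp.weight deg e) := by
  have hmem := SetLike.list_prod_map_mem_graded (A := Z) (e.support.sort (· ≤ ·))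
    (fun x => e x • deg x) (fun x => h x ^ e x) fun x _ => SetLike.pow_mem_graded _ (hh x)
  rwa [← List.sum_toFinset _ (Finset.sort_nodup _ _), Finset.sort_toFinset] at hmem

variable [Algebra ℚ R] {deg : ι → ℤ}

/-- The exponents that are at most one on the generators of odd degree. -/
abbrev AdmissibleExponent (deg : ι → ℤ) : Type :=
  {e : ι →₀ ℕ // ∀ x, Odd (deg x) → e x ≤ 1}

theorem KoszulCommute.monomialIn_eq_zero {h : ι → R} (hh : KoszulCommute deg h) {e : ι →₀ ℕ}
    {x : ι} (hx : Odd (deg x)) (he : 1 < e x) : monomialIn lo h e = 0 := by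
  refine List.prod_eq_zero (List.mem_map.2 ⟨x, ?_, ?_⟩)
  · exact (Finset.mem_sort _).2 (Finsupp.mem_support_iff.2 (by lia))
  · exact pow_eq_zero_of_le he (by rw [pow_two, hh.mul_self_eq_zero hx])

/-- The scalar and the exponent depend on the word and the degrees only, which is what makes the
universal property of free generators well defined. -/
theorem exists_prod_map_eq_smul_monomialIn (deg : ι → ℤ) (L : List ι) :
    ∃ (c : ℚ) (e : AdmissibleExponent deg), ∀ {R : Type} [Ring R] [Algebra ℚ R] (h : ι → R),
      KoszulCommute deg h → (L.map h).prod = c • monomialIn lo h e.1 := by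
  induction L with
  | nil => exact ⟨1, ⟨0, by simp⟩, fun h _ => by simp [monomialIn_zero]⟩
  | cons x L ih =>
    obtain ⟨c, e, hL⟩ := ih
    obtain ⟨ε, hx⟩ := exists_mul_prod_map_eq_smul deg x e.1 _
      ((insert x e.1.support).sort_nodup (· ≤ ·)) (by simp)
    have hmul {R : Type} [Ring R] [Algebra ℚ R] (h : ι → R) (hh : KoszulCommute deg h) :
        h x * monomialIn lo h e.1 = ε • monomialIn lo h (e.1 + Finsupp.single x 1) := by
      have hsupp : (e.1 + Finsupp.single x 1).support ⊆ insert x e.1.support := fun y hy => by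
        by_contra hy'
        simp_all [Finsupp.single_apply, eq_comm]
      rw [monomialIn_eq_prod_sort h (Finset.subset_insert x _), hx h hh,
        monomialIn_eq_prod_sort h hsupp]
    by_cases hadm : ∀ y, Odd (deg y) → (e.1 + Finsupp.single x 1 : ι →₀ ℕ) y ≤ 1
    · refine ⟨c * ε, ⟨_, hadm⟩, fun h hh => ?_⟩
      rw [List.map_cons, List.prod_cons, hL h hh, mul_smul_comm, hmul h hh, smul_smul]
    · push Not at hadm
      obtain ⟨y, hy, hlt⟩ := hadm
      refine ⟨0, e, fun h hh => ?_⟩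
      rw [List.map_cons, List.prod_cons, hL h hh, mul_smul_comm, hmul h hh,
        hh.monomialIn_eq_zero hy hlt, smul_zero, smul_zero, zero_smul]

end OrderedMonomials

theorem le_span_image_of_projection {K V κ : Type*} [Field K] [AddCommGroup V] [Module K V]
    {b : κ → V} (hspan : ⊤ ≤ Submodule.span K (Set.range b)) {p : V →ₗ[K] V} {s : Set κ}
    (fixes : ∀ k ∈ s, p (b k) = b k) (kills : ∀ k ∉ s, p (b k) = 0) {W : Submodule K V}
    (hW : ∀ x ∈ W, p x = x) : W ≤ Submodule.span K (b '' s) := by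
  have hp : (Submodule.span K (Set.range b)).map p ≤ Submodule.span K (b '' s) := by
    rw [Submodule.map_span_le]
    rintro _ ⟨k, rfl⟩
    by_cases hk : k ∈ s
    · rw [fixes k hk]
      exact Submodule.subset_span ⟨k, hk, rfl⟩
    · rw [kills k hk]
      exact zero_mem _
  exact fun x hx => hp ⟨x, hspan trivial, hW x hx⟩

namespace CDGA

noncomputable instance gradedAlgebra (A : CDGA) : GradedAlgebra A.grading where
  __ := A.internal.chooseDecomposition
  one_mem := A.one_mem
  mul_mem _ _ _ _ := A.mul_mem

section Homogeneous

variable {A : CDGA} {n : ℤ}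

theorem proj_of_mem {a : A.carrier} (ha : a ∈ A.grading n) :
    GradedAlgebra.proj A.grading n a = a := by
  rw [GradedAlgebra.proj_apply, DirectSum.decompose_of_mem_same _ ha]

theorem proj_of_mem_of_ne {m : ℤ} {a : A.carrier} (ha : a ∈ A.grading m) (hmn : m ≠ n) :
    GradedAlgebra.proj A.grading n a = 0 := by
  rw [GradedAlgebra.proj_apply, DirectSum.decompose_of_mem_ne _ ha hmn]

theorem grading_le_span_of_homogeneous {κ : Type} {b : κ → A.carrier} {deg : κ → ℤ}
    (hb : ∀ k, b k ∈ A.grading (deg k)) (hspan : ⊤ ≤ Submodule.span ℚ (Set.range b)) (n : ℤ) :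
    A.grading n ≤ Submodule.span ℚ (b '' {k | deg k = n}) :=
  le_span_image_of_projection hspan (p := GradedAlgebra.proj A.grading n)
    (s := {k | deg k = n}) (fun k (hk : deg k = n) => proj_of_mem (hk ▸ hb k))
    (fun k hk => proj_of_mem_of_ne (hb k) hk)
    fun _ => proj_of_mem

end Homogeneous

/-- The family `g` of homogeneous elements, of degrees `deg x ≥ 2`, freely generates `A` as a
graded-commutative algebra: its admissible ordered monomials form a basis. -/
structure FreeOn (A : CDGA) {ι : Type} [lo : LinearOrder ι] (deg : ι → ℤ)
    (g : ι → A.carrier) : Prop where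
  two_le_deg : ∀ x, 2 ≤ deg x
  mem_grading : ∀ x, g x ∈ A.grading (deg x)
  linearIndependent : LinearIndependent ℚ fun e : AdmissibleExponent deg => monomialIn lo g e.1
  top_le_span : ⊤ ≤ Submodule.span ℚ
    (Set.range fun e : AdmissibleExponent deg => monomialIn lo g e.1)

namespace FreeOn

variable {A : CDGA} {ι : Type} [lo : LinearOrder ι] {deg : ι → ℤ} {g : ι → A.carrier}

theorem koszulCommute (F : A.FreeOn deg g) : KoszulCommute deg g :=
  fun x y => A.gcomm (F.mem_grading x) (F.mem_grading y)

theorem top_le_span_words (F : A.FreeOn deg g) :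
    ⊤ ≤ Submodule.span ℚ (Set.range fun L : List ι => (L.map g).prod) := by
  refine F.top_le_span.trans (Submodule.span_mono ?_)
  rintro _ ⟨e, rfl⟩
  obtain ⟨L, hL⟩ := exists_prod_map_eq_monomialIn e.1
  exact ⟨L, (hL g).symm⟩

theorem grading_le_span_words (F : A.FreeOn deg g) (n : ℤ) :
    A.grading n ≤
      Submodule.span ℚ ((fun L : List ι => (L.map g).prod) '' {L | (L.map deg).sum = n}) :=
  grading_le_span_of_homogeneous
    (fun L => SetLike.list_prod_map_mem_graded L deg g fun x _ => F.mem_grading x)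
    F.top_le_span_words n

theorem sum_map_deg_nonneg (F : A.FreeOn deg g) (L : List ι) : 0 ≤ (L.map deg).sum :=
  List.sum_nonneg (List.forall_mem_map.2 fun x _ => by linarith [F.two_le_deg x])

theorem length_le_sum_map_deg (F : A.FreeOn deg g) (L : List ι) :
    2 * (L.length : ℤ) ≤ (L.map deg).sum := by
  induction L with
  | nil => simp
  | cons x L ih =>
    have := F.two_le_deg x
    simp only [List.length_cons, List.map_cons, List.sum_cons]
    push_cast
    lia

theorem grading_one (F : A.FreeOn deg g) : A.grading 1 = ⊥ := by
  refine eq_bot_iff.2 ((F.grading_le_span_words 1).trans (Submodule.span_le.2 ?_))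
  rintro _ ⟨_ | ⟨x, L⟩, hL, rfl⟩
  · simp at hL
  · have := F.two_le_deg x
    have := F.sum_map_deg_nonneg L
    simp only [List.map_cons, List.sum_cons, Set.mem_ofPred_eq] at hL
    lia

theorem finiteDimensional_grading [Finite ι] (F : A.FreeOn deg g) (n : ℤ) :
    FiniteDimensional ℚ (A.grading n) := by
  have hfin : {L : List ι | (L.map deg).sum = n}.Finite := by
    refine (List.finite_length_le ι n.toNat).subset fun L (hL : (L.map deg).sum = n) => ?_
    have := F.length_le_sum_map_deg L
    simp only [Set.mem_ofPred_eq]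
    lia
  have := FiniteDimensional.span_of_finite ℚ (hfin.image fun L => (L.map g).prod)
  exact Submodule.finiteDimensional_of_le (F.grading_le_span_words n)

theorem grading_le_of_gen_mem (F : A.FreeOn deg g) {N : ℤ} {P : ℤ → Submodule ℚ A.carrier}
    (one : 1 ∈ P 0) (gen : ∀ x, deg x ≤ N → g x ∈ P (deg x))
    (mul : ∀ {i j a b}, i + j ≤ N → a ∈ A.grading i → b ∈ A.grading j → a ∈ P i → b ∈ P j →
      a * b ∈ P (i + j)) {n : ℤ} (hn : n ≤ N) : A.grading n ≤ P n := by
  have word (L : List ι) (hL : (L.map deg).sum ≤ N) : (L.map g).prod ∈ P (L.map deg).sum := by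
    induction L with
    | nil => exact one
    | cons x L ih =>
      simp only [List.map_cons, List.sum_cons, List.prod_cons] at hL ⊢
      have hx := F.two_le_deg x
      have hL' := F.sum_map_deg_nonneg L
      exact mul hL (F.mem_grading x)
        (SetLike.list_prod_map_mem_graded L deg g fun y _ => F.mem_grading y)
        (gen x (by lia)) (ih (by lia))
  refine (F.grading_le_span_words n).trans (Submodule.span_le.2 ?_)
  rintro _ ⟨L, rfl, rfl⟩
  exact word L hn

section UniversalProperty

variable {R : Type} [Ring R] [Algebra ℚ R]

theorem algHom_ext (F : A.FreeOn deg g) {Φ Ψ : A.carrier →ₐ[ℚ] R} (h : ∀ x, Φ (g x) = Ψ (g x)) :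
    Φ = Ψ := by
  apply AlgHom.toLinearMap_injective
  refine LinearMap.ext_on (top_le_iff.1 F.top_le_span_words) ?_
  rintro _ ⟨L, rfl⟩
  simp [map_list_prod, Function.comp_def, h]

theorem exists_algHom (F : A.FreeOn deg g) {h : ι → R} (hh : KoszulCommute deg h) :
    ∃ Ψ : A.carrier →ₐ[ℚ] R, ∀ x, Ψ (g x) = h x := by
  let monomialBasis := Module.Basis.mk F.linearIndependent F.top_le_span
  let Ψ : A.carrier →ₗ[ℚ] R := monomialBasis.constr ℚ fun e => monomialIn lo h e.1
  have hword (L : List ι) : Ψ (L.map g).prod = (L.map h).prod := by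
    obtain ⟨c, e, hL⟩ := exists_prod_map_eq_smul_monomialIn deg L
    have hΨ : Ψ (monomialIn lo g e.1) = monomialIn lo h e.1 := by
      simpa [monomialBasis] using monomialBasis.constr_basis ℚ (fun e => monomialIn lo h e.1) e
    rw [hL g F.koszulCommute, hL h hh, map_smul, hΨ]
  have hmul : ∀ a b, Ψ (a * b) = Ψ a * Ψ b := by
    have : (LinearMap.mul ℚ A.carrier).compr₂ Ψ = (LinearMap.mul ℚ R).compl₁₂ Ψ Ψ := by
      refine LinearMap.ext_on (top_le_iff.1 F.top_le_span_words) ?_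
      rintro _ ⟨L, rfl⟩
      refine LinearMap.ext_on (top_le_iff.1 F.top_le_span_words) ?_
      rintro _ ⟨L', rfl⟩
      simpa [hword] using hword (L ++ L')
    exact fun a b => LinearMap.congr_fun₂ this a b
  exact ⟨AlgHom.ofLinearMap Ψ (by simpa using hword []) hmul, fun x => by simpa using hword [x]⟩

theorem map_mem_graded (F : A.FreeOn deg g) (Z : ℤ → Submodule ℚ R) [SetLike.GradedMonoid Z]
    {Ψ : A.carrier →ₐ[ℚ] R} (hΨ : ∀ x, Ψ (g x) ∈ Z (deg x)) {n : ℤ} {a : A.carrier}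
    (ha : a ∈ A.grading n) : Ψ a ∈ Z n := by
  refine F.grading_le_of_gen_mem (N := n) (P := fun i => (Z i).comap Ψ.toLinearMap) ?_
    (fun x _ => hΨ x) (fun _ _ _ ha hb => ?_) le_rfl ha
  · simpa using SetLike.GradedOne.one_mem (A := Z)
  · simpa using SetLike.GradedMul.mul_mem (A := Z) ha hb

end UniversalProperty

end FreeOn

end CDGA

/-- The laws of a graded-commutative differential graded algebra, imposed on the homogeneous
elements of a ring `R` whose graded pieces `Z n` need not span `R`. -/
structure IsPreCDGA {R : Type} [Ring R] [Algebra ℚ R] (Z : ℤ → Submodule ℚ R)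
    [SetLike.GradedMonoid Z] (dZ : R →ₗ[ℚ] R) : Prop where
  gcomm : ∀ {i j : ℤ} {a b : R}, a ∈ Z i → b ∈ Z j → a * b = ((-1 : ℚ) ^ (i * j)) • (b * a)
  d_mem : ∀ {i : ℤ} {a : R}, a ∈ Z i → dZ a ∈ Z (i + 1)
  d_sq : ∀ {i : ℤ} {a : R}, a ∈ Z i → dZ (dZ a) = 0
  leibniz : ∀ {i j : ℤ} {a b : R}, a ∈ Z i → b ∈ Z j →
    dZ (a * b) = dZ a * b + ((-1 : ℚ) ^ i) • (a * dZ b)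

/-- A surjective quasi-isomorphism `f` onto a cdga `Y`, in the form in which it enters lifting
arguments: `f` is degreewise surjective, and every cocycle in its kernel bounds in its kernel. -/
structure IsTrivialFibration {R : Type} [Ring R] [Algebra ℚ R] (Z : ℤ → Submodule ℚ R)
    (dZ : R →ₗ[ℚ] R) {Y : CDGA} (f : R →ₐ[ℚ] Y.carrier) : Prop where
  comm_d : ∀ {n : ℤ} {z : R}, z ∈ Z n → f (dZ z) = Y.d (f z)
  exists_map_eq : ∀ {n : ℤ} {y : Y.carrier}, y ∈ Y.grading n → ∃ z ∈ Z n, f z = y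
  exists_d_eq : ∀ {n : ℤ} {z : R}, z ∈ Z (n + 1) → dZ z = 0 → f z = 0 →
    ∃ z' ∈ Z n, dZ z' = z ∧ f z' = 0

namespace IsPreCDGA

variable {A : CDGA} {R : Type} [Ring R] [Algebra ℚ R] {Z : ℤ → Submodule ℚ R}
  [SetLike.GradedMonoid Z] {dZ : R →ₗ[ℚ] R}

theorem d_one (P : IsPreCDGA Z dZ) : dZ 1 = 0 := by
  have one_mem : (1 : R) ∈ Z 0 := SetLike.GradedOne.one_mem
  simpa using P.leibniz one_mem one_mem

theorem d_map_mul (P : IsPreCDGA Z dZ) {Ψ : A.carrier →ₐ[ℚ] R}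
    (hΨ : ∀ {n a}, a ∈ A.grading n → Ψ a ∈ Z n) {i j : ℤ} {a b : A.carrier}
    (ha : a ∈ A.grading i) (hb : b ∈ A.grading j) (hda : dZ (Ψ a) = Ψ (A.d a))
    (hdb : dZ (Ψ b) = Ψ (A.d b)) : dZ (Ψ (a * b)) = Ψ (A.d (a * b)) := by
  rw [map_mul, P.leibniz (hΨ ha) (hΨ hb), A.leibniz ha, map_add, map_smul, map_mul, map_mul,
    hda, hdb]

end IsPreCDGA

namespace CDGA

theorem isPreCDGA (A : CDGA) : IsPreCDGA A.grading A.d where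
  gcomm := A.gcomm
  d_mem := A.d_mem
  d_sq _ := A.d_sq _
  leibniz ha _ := A.leibniz ha _

/-- The decomposable elements of degree `n`. -/
def decomposablesAt (A : CDGA) (n : ℤ) : Submodule ℚ A.carrier :=
  Submodule.span ℚ {z | ∃ i j : ℤ, 0 < i ∧ 0 < j ∧ i + j = n ∧
    ∃ x ∈ A.grading i, ∃ y ∈ A.grading j, z = x * y}

theorem mem_decomposablesAt {A : CDGA} {n : ℤ} {a : A.carrier} (ha : a ∈ A.grading n)
    (hdec : a ∈ A.decomposables) : a ∈ A.decomposablesAt n := by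
  have hproj : A.decomposables.map (GradedAlgebra.proj A.grading n) ≤ A.decomposablesAt n := by
    rw [decomposables, Submodule.map_span_le]
    rintro _ ⟨x, ⟨i, hi, hx⟩, y, ⟨j, hj, hy⟩, rfl⟩
    by_cases hij : i + j = n
    · rw [proj_of_mem (hij ▸ A.mul_mem hx hy)]
      exact Submodule.subset_span ⟨i, j, hi, hj, hij, x, hx, y, hy, rfl⟩
    · rw [proj_of_mem_of_ne (A.mul_mem hx hy) hij]
      exact zero_mem _
  exact hproj ⟨a, hdec, proj_of_mem ha⟩

namespace FreeOn

variable {A : CDGA} {ι : Type} [LinearOrder ι] {deg : ι → ℤ} {g : ι → A.carrier}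

theorem decomposablesAt_le (F : A.FreeOn deg g) {n : ℤ} {P : Submodule ℚ A.carrier}
    (mul : ∀ {i j x y}, 2 ≤ i → 2 ≤ j → i + j = n → x ∈ A.grading i → y ∈ A.grading j →
      x * y ∈ P) : A.decomposablesAt n ≤ P := by
  refine Submodule.span_le.2 ?_
  rintro _ ⟨i, j, hi, hj, hij, x, hx, y, hy, rfl⟩
  have eq_zero {a : A.carrier} (ha : a ∈ A.grading 1) : a = 0 := by
    rwa [F.grading_one, Submodule.mem_bot] at ha
  obtain rfl | hi : i = 1 ∨ 2 ≤ i := by lia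
  · simp [eq_zero hx]
  obtain rfl | hj : j = 1 ∨ 2 ≤ j := by lia
  · simp [eq_zero hy]
  exact mul hi hj hij hx hy

theorem eqOn_grading {R : Type} [Ring R] [Algebra ℚ R] (F : A.FreeOn deg g)
    {Φ Ψ : A.carrier →ₐ[ℚ] R} {N : ℤ} (h : ∀ x, deg x ≤ N → Φ (g x) = Ψ (g x)) {n : ℤ}
    (hn : n ≤ N) {a : A.carrier} (ha : a ∈ A.grading n) : Φ a = Ψ a := by
  refine F.grading_le_of_gen_mem (N := N)
    (P := fun _ => LinearMap.eqLocus Φ.toLinearMap Ψ.toLinearMap) ?_ h ?_ hn ha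
  · simp
  · intro i j a b _ _ _ hΦa hΦb
    simp only [LinearMap.mem_eqLocus, AlgHom.toLinearMap_apply, map_mul] at hΦa hΦb ⊢
    rw [hΦa, hΦb]

section Lifting

variable {R : Type} [Ring R] [Algebra ℚ R] {Z : ℤ → Submodule ℚ R} [SetLike.GradedMonoid Z]
  {dZ : R →ₗ[ℚ] R}

theorem d_map_of_mem_grading (F : A.FreeOn deg g) (P : IsPreCDGA Z dZ) {Ψ : A.carrier →ₐ[ℚ] R}
    (hΨ : ∀ x, Ψ (g x) ∈ Z (deg x)) {N : ℤ}
    (hd : ∀ x, deg x ≤ N → dZ (Ψ (g x)) = Ψ (A.d (g x))) {n : ℤ} (hn : n ≤ N) {a : A.carrier}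
    (ha : a ∈ A.grading n) : dZ (Ψ a) = Ψ (A.d a) := by
  refine F.grading_le_of_gen_mem (N := N)
    (P := fun _ => LinearMap.eqLocus (dZ ∘ₗ Ψ.toLinearMap) (Ψ.toLinearMap ∘ₗ A.d)) ?_ hd
    (fun _ ha hb => P.d_map_mul (F.map_mem_graded Z hΨ) ha hb) hn ha
  simp [P.d_one, A.isPreCDGA.d_one]

theorem exists_correction (F : A.FreeOn deg g) (P : IsPreCDGA Z dZ) {Y : CDGA}
    {f : R →ₐ[ℚ] Y.carrier} (hf : IsTrivialFibration Z dZ f) (φ : CDGAHom A Y)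
    {Ψ : A.carrier →ₐ[ℚ] R} (hΨ : ∀ x, Ψ (g x) ∈ Z (deg x)) (hfΨ : f.comp Ψ = φ.toFun) {x : ι}
    (hd : ∀ y, deg y < deg x → dZ (Ψ (g y)) = Ψ (A.d (g y)))
    (hdec : A.d (g x) ∈ A.decomposablesAt (deg x + 1)) :
    ∃ c ∈ Z (deg x), f c = 0 ∧ dZ (Ψ (g x) + c) = Ψ (A.d (g x)) := by
  have hΨmem {n a} : a ∈ A.grading n → Ψ a ∈ Z n := F.map_mem_graded Z hΨ
  have hlow {n a} (hn : n < deg x) : a ∈ A.grading n → dZ (Ψ a) = Ψ (A.d a) :=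
    F.d_map_of_mem_grading P hΨ (fun y hy => hd y (hy.trans_lt hn)) le_rfl
  have hcocycle : dZ (Ψ (A.d (g x))) = 0 := by
    have hcomm : A.decomposablesAt (deg x + 1) ≤
        LinearMap.eqLocus (dZ ∘ₗ Ψ.toLinearMap) (Ψ.toLinearMap ∘ₗ A.d) :=
      F.decomposablesAt_le fun hi hj hij hu hv =>
        P.d_map_mul hΨmem hu hv (hlow (by lia) hu) (hlow (by lia) hv)
    simpa [A.d_sq] using hcomm hdec
  obtain ⟨c, hc, hdc, hfc⟩ := hf.exists_d_eq (z := Ψ (A.d (g x)) - dZ (Ψ (g x)))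
    (sub_mem (hΨmem (A.d_mem (F.mem_grading x))) (P.d_mem (hΨ x)))
    (by rw [map_sub, hcocycle, P.d_sq (hΨ x), sub_zero])
    (by rw [map_sub, hf.comm_d (hΨ x), ← AlgHom.comp_apply, ← AlgHom.comp_apply, hfΨ, φ.comm_d,
      sub_self])
  exact ⟨c, hc, hfc, by rw [map_add, hdc, add_sub_cancel]⟩

theorem exists_lift_succ (F : A.FreeOn deg g) (hdec : ∀ x, A.d (g x) ∈ A.decomposables)
    (P : IsPreCDGA Z dZ) {Y : CDGA} {f : R →ₐ[ℚ] Y.carrier} (hf : IsTrivialFibration Z dZ f)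
    (φ : CDGAHom A Y) {k : ℤ} {Ψ : A.carrier →ₐ[ℚ] R} (hΨ : ∀ x, Ψ (g x) ∈ Z (deg x))
    (hfΨ : f.comp Ψ = φ.toFun) (hd : ∀ x, deg x ≤ k → dZ (Ψ (g x)) = Ψ (A.d (g x))) :
    ∃ Ψ' : A.carrier →ₐ[ℚ] R, (∀ x, Ψ' (g x) ∈ Z (deg x)) ∧ f.comp Ψ' = φ.toFun ∧
      ∀ x, deg x ≤ k + 1 → dZ (Ψ' (g x)) = Ψ' (A.d (g x)) := by
  have hdgen (x : ι) : A.d (g x) ∈ A.decomposablesAt (deg x + 1) :=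
    mem_decomposablesAt (A.d_mem (F.mem_grading x)) (hdec x)
  have hcorrection (x : ι) : ∃ c ∈ Z (deg x), f c = 0 ∧ (deg x ≤ k → c = 0) ∧
      (deg x = k + 1 → dZ (Ψ (g x) + c) = Ψ (A.d (g x))) := by
    by_cases hx : deg x = k + 1
    · obtain ⟨c, hc, hfc, hdc⟩ :=
        F.exists_correction P hf φ hΨ hfΨ (fun y hy => hd y (by lia)) (hdgen x)
      exact ⟨c, hc, hfc, by lia, fun _ => hdc⟩
    · exact ⟨0, zero_mem _, map_zero f, fun _ => rfl, fun h => absurd h hx⟩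
  choose c hc hfc hc_low hc_top using hcorrection
  have hmem (x : ι) : Ψ (g x) + c x ∈ Z (deg x) := add_mem (hΨ x) (hc x)
  obtain ⟨Ψ', hΨ'⟩ := F.exists_algHom (h := fun x => Ψ (g x) + c x)
    fun x y => P.gcomm (hmem x) (hmem y)
  have hagree {n a} (hn : n ≤ k) (ha : a ∈ A.grading n) : Ψ' a = Ψ a :=
    F.eqOn_grading (fun x hx => by rw [hΨ', hc_low x hx, add_zero]) hn ha
  have hagree_d {x : ι} (hx : deg x ≤ k + 1) : Ψ' (A.d (g x)) = Ψ (A.d (g x)) := by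
    have : A.decomposablesAt (deg x + 1) ≤ LinearMap.eqLocus Ψ'.toLinearMap Ψ.toLinearMap :=
      F.decomposablesAt_le fun hi hj hij hu hv => by
        simp [hagree (by lia) hu, hagree (by lia) hv]
    exact this (hdgen x)
  refine ⟨Ψ', fun x => (hΨ' x).symm ▸ hmem x, ?_, fun x hx => ?_⟩
  · rw [← hfΨ]
    exact F.algHom_ext fun x => by simp [hΨ', hfc]
  · rw [hagree_d hx, hΨ']
    obtain hx | hx : deg x ≤ k ∨ deg x = k + 1 := by lia
    · rw [hc_low x hx, add_zero, hd x hx]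
    · exact hc_top x hx

theorem exists_lift [Finite ι] (F : A.FreeOn deg g) (hdec : ∀ x, A.d (g x) ∈ A.decomposables)
    (P : IsPreCDGA Z dZ) {Y : CDGA} {f : R →ₐ[ℚ] Y.carrier} (hf : IsTrivialFibration Z dZ f)
    (φ : CDGAHom A Y) :
    ∃ Ψ : A.carrier →ₐ[ℚ] R, (∀ n, ∀ a ∈ A.grading n, Ψ a ∈ Z n) ∧
      (∀ a, dZ (Ψ a) = Ψ (A.d a)) ∧ f.comp Ψ = φ.toFun := by
  have stage (k : ℕ) : ∃ Ψ : A.carrier →ₐ[ℚ] R, (∀ x, Ψ (g x) ∈ Z (deg x)) ∧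
      f.comp Ψ = φ.toFun ∧ ∀ x, deg x ≤ k → dZ (Ψ (g x)) = Ψ (A.d (g x)) := by
    induction k with
    | zero =>
      choose h hZ hfh using fun x => hf.exists_map_eq (φ.map_grading _ _ (F.mem_grading x))
      obtain ⟨Ψ, hΨ⟩ := F.exists_algHom (h := h) fun x y => P.gcomm (hZ x) (hZ y)
      refine ⟨Ψ, fun x => (hΨ x).symm ▸ hZ x, F.algHom_ext fun x => ?_, fun x hx => ?_⟩
      · rw [AlgHom.comp_apply, hΨ, hfh]
      · have := F.two_le_deg x
        lia
    | succ k ih =>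
      obtain ⟨Ψ, hΨ, hfΨ, hd⟩ := ih
      exact_mod_cast F.exists_lift_succ hdec P hf φ hΨ hfΨ hd
  obtain ⟨N, hN⟩ := (Set.finite_range deg).bddAbove
  replace hN (x : ι) : deg x ≤ N.toNat := (hN ⟨x, rfl⟩).trans (Int.self_le_toNat N)
  obtain ⟨Ψ, hΨ, hfΨ, hd⟩ := stage N.toNat
  refine ⟨Ψ, fun n a => F.map_mem_graded Z hΨ, fun a => ?_, hfΨ⟩
  have hcomm : ⨆ n, A.grading n ≤
      LinearMap.eqLocus (dZ ∘ₗ Ψ.toLinearMap) (Ψ.toLinearMap ∘ₗ A.d) :=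
    iSup_le fun n a ha => F.d_map_of_mem_grading P hΨ (fun x _ => hd x (hN x)) le_rfl ha
  exact hcomm (A.internal.submodule_iSup_eq_top ▸ Submodule.mem_top)

end Lifting

end FreeOn

end CDGA

section PolynomialForms

open Polynomial

variable {R : Type} [Ring R] [Algebra ℚ R]

/-- The `ℚ`-linear map `d`, applied to each coefficient of a polynomial. -/
noncomputable def coeffwise (d : R →ₗ[ℚ] R) : R[X] →ₗ[ℚ] R[X] :=
  Polynomial.lsum fun i => ((monomial i).restrictScalars ℚ) ∘ₗ d

/-- The antiderivative with vanishing constant coefficient. -/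
noncomputable def antiderivative : R[X] →ₗ[ℚ] R[X] :=
  Polynomial.lsum fun i =>
    (1 / ((i : ℚ) + 1)) • ((monomial (i + 1) : R →ₗ[R] R[X]).restrictScalars ℚ)

/-- Evaluation at a rational number, which is central in `R`. -/
noncomputable def evalRat (c : ℚ) : R[X] →ₐ[ℚ] R :=
  eval₂AlgHom (AlgHom.id ℚ R) (algebraMap ℚ R c) fun a => (Algebra.commutes c a).symm

/-- The polynomials all of whose coefficients have degree `n`. -/
noncomputable def polynomialGrading (Z : ℤ → Submodule ℚ R) (n : ℤ) : Submodule ℚ R[X] :=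
  ⨅ k, (Z n).comap ((lcoeff R k).restrictScalars ℚ)

theorem mem_polynomialGrading {Z : ℤ → Submodule ℚ R} {n : ℤ} {p : R[X]} :
    p ∈ polynomialGrading Z n ↔ ∀ k, p.coeff k ∈ Z n := by
  simp [polynomialGrading]

theorem coeff_coeffwise (d : R →ₗ[ℚ] R) (p : R[X]) (k : ℕ) :
    (coeffwise d p).coeff k = d (p.coeff k) := by
  induction p using Polynomial.induction_on' with
  | add p q hp hq => simp [hp, hq]
  | monomial i a =>
    simp only [coeffwise, lsum_apply, LinearMap.comp_apply, LinearMap.coe_restrictScalars, map_zero,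
      sum_monomial_index, coeff_monomial]
    split_ifs <;> simp

theorem coeff_antiderivative_zero (p : R[X]) : (antiderivative p).coeff 0 = 0 := by
  induction p using Polynomial.induction_on' with
  | add p q hp hq => simp [hp, hq]
  | monomial i a => simp [antiderivative, lsum_apply, coeff_monomial]

theorem coeff_antiderivative_succ (p : R[X]) (k : ℕ) :
    (antiderivative p).coeff (k + 1) = (1 / ((k : ℚ) + 1)) • p.coeff k := by
  induction p using Polynomial.induction_on' with
  | add p q hp hq => simp [hp, hq]
  | monomial i a =>
    simp only [antiderivative, lsum_apply, LinearMap.smul_apply, LinearMap.coe_restrictScalars,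
      map_zero, smul_zero, sum_monomial_index, coeff_smul, coeff_monomial, add_left_inj]
    split_ifs with h <;> simp [h]

theorem coeff_derivative_eq_smul (p : R[X]) (k : ℕ) :
    (derivative p).coeff k = ((k : ℚ) + 1) • p.coeff (k + 1) := by
  rw [coeff_derivative, add_smul, one_smul, mul_add_one, Nat.cast_smul_eq_nsmul, nsmul_eq_mul,
    Nat.cast_comm]

theorem derivative_antiderivative (p : R[X]) : derivative (antiderivative p) = p := by
  ext k
  rw [coeff_derivative_eq_smul, coeff_antiderivative_succ, smul_smul, mul_one_div_cancel, one_smul]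
  positivity

theorem antiderivative_derivative (p : R[X]) :
    antiderivative (derivative p) = p - C (p.coeff 0) := by
  ext (_ | k)
  · simp [coeff_antiderivative_zero]
  · have : (k : ℚ) + 1 ≠ 0 := by positivity
    simp [coeff_antiderivative_succ, coeff_derivative_eq_smul, smul_smul, this]

theorem coeffwise_antiderivative (d : R →ₗ[ℚ] R) (p : R[X]) :
    coeffwise d (antiderivative p) = antiderivative (coeffwise d p) := by
  ext (_ | k)
  · simp [coeff_antiderivative_zero, coeff_coeffwise]
  · simp [coeff_antiderivative_succ, coeff_coeffwise]

theorem coeffwise_derivative (d : R →ₗ[ℚ] R) (p : R[X]) :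
    coeffwise d (derivative p) = derivative (coeffwise d p) := by
  ext k
  simp only [coeff_coeffwise, coeff_derivative_eq_smul, map_smul]

theorem coeffwise_monomial (d : R →ₗ[ℚ] R) (k : ℕ) (a : R) :
    coeffwise d (monomial k a) = monomial k (d a) := by
  ext m
  simp only [coeff_coeffwise, coeff_monomial]
  split_ifs <;> simp

theorem coeffwise_C (d : R →ₗ[ℚ] R) (a : R) : coeffwise d (C a) = C (d a) :=
  coeffwise_monomial d 0 a

theorem eq_C_add_of_coeffwise_eq_derivative {d : R →ₗ[ℚ] R} {p q : R[X]}
    (h : derivative p = coeffwise d q) :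
    p = C (p.coeff 0) + coeffwise d (antiderivative q) := by
  rw [coeffwise_antiderivative, ← h, antiderivative_derivative, add_sub_cancel]

theorem evalRat_monomial (c : ℚ) (k : ℕ) (a : R) : evalRat c (monomial k a) = c ^ k • a := by
  calc evalRat c (monomial k a) = a * algebraMap ℚ R c ^ k := eval₂_monomial _ _
    _ = c ^ k • a := by rw [← map_pow, ← Algebra.commutes, Algebra.smul_def]

theorem evalRat_C (c : ℚ) (a : R) : evalRat c (C a) = a := by
  simpa using evalRat_monomial c 0 a

theorem evalRat_zero (p : R[X]) : evalRat 0 p = p.coeff 0 := by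
  induction p using Polynomial.induction_on' with
  | add p q hp hq => simp [hp, hq]
  | monomial k a => rcases k with _ | k <;> simp [evalRat_C, evalRat_monomial, coeff_monomial]

theorem evalRat_coeffwise (c : ℚ) (d : R →ₗ[ℚ] R) (p : R[X]) :
    evalRat c (coeffwise d p) = d (evalRat c p) := by
  induction p using Polynomial.induction_on' with
  | add p q hp hq => simp [hp, hq]
  | monomial k a => rw [coeffwise_monomial, evalRat_monomial, evalRat_monomial, map_smul]

section Grading

variable {Z : ℤ → Submodule ℚ R} {n : ℤ}

theorem monomial_mem_polynomialGrading {a : R} (ha : a ∈ Z n) (k : ℕ) :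
    monomial k a ∈ polynomialGrading Z n := by
  refine mem_polynomialGrading.2 fun m => ?_
  rw [coeff_monomial]
  split_ifs
  exacts [ha, zero_mem _]

theorem derivative_mem_polynomialGrading {p : R[X]} (hp : p ∈ polynomialGrading Z n) :
    derivative p ∈ polynomialGrading Z n := by
  refine mem_polynomialGrading.2 fun k => ?_
  rw [coeff_derivative_eq_smul]
  exact Submodule.smul_mem _ _ (mem_polynomialGrading.1 hp _)

theorem antiderivative_mem_polynomialGrading {p : R[X]} (hp : p ∈ polynomialGrading Z n) :
    antiderivative p ∈ polynomialGrading Z n := by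
  refine mem_polynomialGrading.2 fun k => ?_
  rcases k with _ | k
  · rw [coeff_antiderivative_zero]
    exact zero_mem _
  · rw [coeff_antiderivative_succ]
    exact Submodule.smul_mem _ _ (mem_polynomialGrading.1 hp _)

theorem evalRat_mem {p : R[X]} (hp : p ∈ polynomialGrading Z n) (c : ℚ) : evalRat c p ∈ Z n := by
  have : evalRat c p = p.sum fun k a => c ^ k • a := by
    conv_lhs => rw [p.as_sum_support, map_sum]
    simp only [evalRat_monomial, sum_def]
  rw [this, sum_def]
  exact sum_mem fun k _ => Submodule.smul_mem _ _ (mem_polynomialGrading.1 hp k)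

instance [SetLike.GradedMonoid Z] : SetLike.GradedMonoid (polynomialGrading Z) where
  one_mem := monomial_mem_polynomialGrading SetLike.GradedOne.one_mem 0
  mul_mem i j p q hp hq := by
    refine mem_polynomialGrading.2 fun k => ?_
    rw [coeff_mul]
    exact sum_mem fun x _ => SetLike.GradedMul.mul_mem (mem_polynomialGrading.1 hp _)
      (mem_polynomialGrading.1 hq _)

theorem IsPreCDGA.polynomial [SetLike.GradedMonoid Z] {dZ : R →ₗ[ℚ] R} (P : IsPreCDGA Z dZ) :
    IsPreCDGA (polynomialGrading Z) (coeffwise dZ) where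
  gcomm {i j p q} hp hq := by
    rw [mem_polynomialGrading] at hp hq
    ext k
    rw [coeff_smul, coeff_mul, coeff_mul, Finset.smul_sum, ← Finset.Nat.sum_antidiagonal_swap]
    exact Finset.sum_congr rfl fun x _ => P.gcomm (hp _) (hq _)
  d_mem {i p} hp := by
    rw [mem_polynomialGrading] at hp ⊢
    exact fun k => coeff_coeffwise dZ p k ▸ P.d_mem (hp k)
  d_sq {i p} hp := by
    rw [mem_polynomialGrading] at hp
    ext k
    simp only [coeff_coeffwise, P.d_sq (hp k), coeff_zero]
  leibniz {i j p q} hp hq := by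
    rw [mem_polynomialGrading] at hp hq
    ext k
    simp only [coeff_coeffwise, coeff_add, coeff_smul, coeff_mul, map_sum, Finset.smul_sum,
      ← Finset.sum_add_distrib]
    exact Finset.sum_congr rfl fun x _ => P.leibniz (hp _) (hq _)

end Grading

end PolynomialForms

section AdjoinDt

variable {S : Type} [Ring S] [Algebra ℚ S]

/-- The form `p + dt q` of total degree `n`, where `dt` has degree one. The sign in
`p dt = (-1)ⁿ dt p` is realised by upper triangular matrices; the separate first component makes
the function part `p` of a form an algebra homomorphism on the whole ambient ring. -/
def dtForm (n : ℤ) : S × S →ₗ[ℚ] S × Matrix (Fin 2) (Fin 2) S where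
  toFun ω := (ω.1, !![((-1 : ℚ) ^ n) • ω.1, ω.2; 0, ω.1])
  map_add' ω η := by
    ext r s
    · rfl
    · fin_cases r <;> fin_cases s <;> simp
  map_smul' c ω := by
    ext r s
    · rfl
    · fin_cases r <;> fin_cases s <;> simp [smul_comm c]

theorem dtForm_fst (n : ℤ) (ω : S × S) : (dtForm n ω).1 = ω.1 := rfl

theorem dtForm_mul (i j : ℤ) (p q p' q' : S) : dtForm i (p, q) * dtForm j (p', q') =
    dtForm (i + j) (p * p', ((-1 : ℚ) ^ i) • (p * q') + q * p') := by
  ext r s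
  · rfl
  · fin_cases r <;> fin_cases s <;>
      simp [dtForm, smul_smul, zpow_add₀]

theorem dtForm_injective (n : ℤ) : Function.Injective (dtForm (S := S) n) := by
  intro ω η h
  ext
  · exact (Prod.ext_iff.1 h).1
  · simpa [dtForm] using congr_arg (fun z : S × Matrix (Fin 2) (Fin 2) S => z.2 0 1) h

/-- The differential `d(p + dt q) = Dp + dt (∂p - Dq)`. -/
def dtDifferential (D der : S →ₗ[ℚ] S) :
    S × Matrix (Fin 2) (Fin 2) S →ₗ[ℚ] S × Matrix (Fin 2) (Fin 2) S where
  toFun z := (D z.1, !![-D (z.2 0 0), der z.1 - D (z.2 0 1); 0, D z.1])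
  map_add' z w := by
    ext r s
    · simp
    · fin_cases r <;> fin_cases s <;> simp <;> abel
  map_smul' c z := by
    ext r s
    · simp
    · fin_cases r <;> fin_cases s <;> simp [smul_sub]

theorem dtDifferential_dtForm (D der : S →ₗ[ℚ] S) (n : ℤ) (p q : S) :
    dtDifferential D der (dtForm n (p, q)) = dtForm (n + 1) (D p, der p - D q) := by
  ext r s
  · rfl
  · fin_cases r <;> fin_cases s <;> simp [dtForm, dtDifferential, zpow_add₀]

/-- The forms `p + dt q` of total degree `n`. -/
def dtGrading (Z : ℤ → Submodule ℚ S) (n : ℤ) : Submodule ℚ (S × Matrix (Fin 2) (Fin 2) S) :=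
  ((Z n).prod (Z (n - 1))).map (dtForm n)

variable {Z : ℤ → Submodule ℚ S}

theorem mem_dtGrading {n : ℤ} {z : S × Matrix (Fin 2) (Fin 2) S} :
    z ∈ dtGrading Z n ↔ ∃ p ∈ Z n, ∃ q ∈ Z (n - 1), dtForm n (p, q) = z := by
  simp only [dtGrading, Submodule.mem_map, Submodule.mem_prod, Prod.exists, and_assoc,
    exists_and_left]

instance [SetLike.GradedMonoid Z] : SetLike.GradedMonoid (dtGrading Z) where
  one_mem := mem_dtGrading.2 ⟨1, SetLike.GradedOne.one_mem, 0, zero_mem _, by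
    ext r s
    · rfl
    · fin_cases r <;> fin_cases s <;> simp [dtForm]⟩
  mul_mem i j z w hz hw := by
    obtain ⟨p, hp, q, hq, rfl⟩ := mem_dtGrading.1 hz
    obtain ⟨p', hp', q', hq', rfl⟩ := mem_dtGrading.1 hw
    have hpq' := SetLike.GradedMul.mul_mem hp hq'
    have hqp' := SetLike.GradedMul.mul_mem hq hp'
    rw [← add_sub_assoc] at hpq'
    rw [sub_add_eq_add_sub] at hqp'
    exact mem_dtGrading.2 ⟨_, SetLike.GradedMul.mul_mem hp hp', _,
      add_mem (Submodule.smul_mem _ _ hpq') hqp', (dtForm_mul i j _ _ _ _).symm⟩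

theorem IsPreCDGA.dtForm_mul_comm [SetLike.GradedMonoid Z] {D : S →ₗ[ℚ] S}
    (P : IsPreCDGA Z D) {i j : ℤ} {p q p' q' : S} (hp : p ∈ Z i) (hq : q ∈ Z (i - 1))
    (hp' : p' ∈ Z j) (hq' : q' ∈ Z (j - 1)) :
    dtForm i (p, q) * dtForm j (p', q') =
      ((-1 : ℚ) ^ (i * j)) • (dtForm j (p', q') * dtForm i (p, q)) := by
  have hsign : (-1 : ℚ) ^ i * (-1) ^ (i * (j - 1)) = (-1) ^ (i * j) := by
    rw [← zpow_add₀ (by simp)]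
    ring_nf
  have hsign' : (-1 : ℚ) ^ ((i - 1) * j) = (-1) ^ (i * j) * (-1) ^ j := by
    rw [sub_one_mul, zpow_sub₀ (by simp), div_eq_mul_inv, ← inv_zpow, inv_neg_one]
  rw [dtForm_mul, dtForm_mul, add_comm j i, ← map_smul]
  congr 1
  ext
  · exact P.gcomm hp hp'
  · simp only [Prod.smul_snd, smul_add, P.gcomm hp hq', P.gcomm hq hp', smul_smul, hsign, hsign',
      add_comm]

theorem IsPreCDGA.dtDifferential_dtForm_mul [SetLike.GradedMonoid Z] {D der : S →ₗ[ℚ] S}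
    (P : IsPreCDGA Z D) (der_mul : ∀ a b, der (a * b) = der a * b + a * der b) {i j : ℤ}
    {p q p' q' : S} (hp : p ∈ Z i) (hq : q ∈ Z (i - 1)) (hp' : p' ∈ Z j) (hq' : q' ∈ Z (j - 1)) :
    dtDifferential D der (dtForm i (p, q) * dtForm j (p', q')) =
      dtDifferential D der (dtForm i (p, q)) * dtForm j (p', q') +
        ((-1 : ℚ) ^ i) • (dtForm i (p, q) * dtDifferential D der (dtForm j (p', q'))) := by
  rw [dtForm_mul, dtDifferential_dtForm, dtDifferential_dtForm, dtDifferential_dtForm, dtForm_mul,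
    dtForm_mul, ← add_assoc, add_right_comm i 1 j, ← map_smul, ← map_add]
  congr 1
  ext
  · exact P.leibniz hp hp'
  · have hsq : (-1 : ℚ) ^ i * (-1) ^ i = 1 := by
      rw [← mul_zpow, neg_one_mul, neg_neg, one_zpow]
    have hneg : (-1 : ℚ) ≠ 0 := by simp
    simp only [der_mul, map_add, map_smul, P.leibniz hp hq', P.leibniz hq hp', smul_add, mul_sub,
      sub_mul, smul_smul, zpow_add₀ hneg, zpow_sub₀ hneg, Prod.snd_add, Prod.smul_snd, zpow_one,
      mul_neg_one, div_neg, div_one, neg_smul, hsq, one_smul]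
    abel

theorem IsPreCDGA.adjoinDt [SetLike.GradedMonoid Z] {D der : S →ₗ[ℚ] S} (P : IsPreCDGA Z D)
    (der_mem : ∀ {n a}, a ∈ Z n → der a ∈ Z n) (der_comm : ∀ a, D (der a) = der (D a))
    (der_mul : ∀ a b, der (a * b) = der a * b + a * der b) :
    IsPreCDGA (dtGrading Z) (dtDifferential D der) where
  gcomm {i j z w} hz hw := by
    obtain ⟨p, hp, q, hq, rfl⟩ := mem_dtGrading.1 hz
    obtain ⟨p', hp', q', hq', rfl⟩ := mem_dtGrading.1 hw
    exact P.dtForm_mul_comm hp hq hp' hq'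
  d_mem {i z} hz := by
    obtain ⟨p, hp, q, hq, rfl⟩ := mem_dtGrading.1 hz
    have hDq := P.d_mem hq
    rw [sub_add_cancel] at hDq
    exact mem_dtGrading.2 ⟨_, P.d_mem hp, _,
      by simpa using sub_mem (der_mem hp) hDq, (dtDifferential_dtForm D der i _ _).symm⟩
  d_sq {i z} hz := by
    obtain ⟨p, hp, q, hq, rfl⟩ := mem_dtGrading.1 hz
    simp only [dtDifferential_dtForm, map_sub, P.d_sq hp, P.d_sq hq, der_comm, sub_self, sub_zero]
    exact map_zero _
  leibniz {i j z w} hz hw := by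
    obtain ⟨p, hp, q, hq, rfl⟩ := mem_dtGrading.1 hz
    obtain ⟨p', hp', q', hq', rfl⟩ := mem_dtGrading.1 hw
    exact P.dtDifferential_dtForm_mul der_mul hp hq hp' hq'

end AdjoinDt

section Pullback

variable {R₁ R₂ S : Type} [Ring R₁] [Algebra ℚ R₁] [Ring R₂] [Algebra ℚ R₂] [Ring S] [Algebra ℚ S]

/-- The degree-`n` part of the pullback of `u` and `v`. -/
def pullbackGrading (Z₁ : ℤ → Submodule ℚ R₁) (Z₂ : ℤ → Submodule ℚ R₂) (u : R₁ →ₐ[ℚ] S)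
    (v : R₂ →ₐ[ℚ] S) (n : ℤ) : Submodule ℚ (R₁ × R₂) :=
  (Z₁ n).prod (Z₂ n) ⊓ LinearMap.eqLocus (u.toLinearMap ∘ₗ LinearMap.fst ℚ R₁ R₂)
    (v.toLinearMap ∘ₗ LinearMap.snd ℚ R₁ R₂)

variable {Z₁ : ℤ → Submodule ℚ R₁} {Z₂ : ℤ → Submodule ℚ R₂} {u : R₁ →ₐ[ℚ] S} {v : R₂ →ₐ[ℚ] S}

theorem mem_pullbackGrading {n : ℤ} {z : R₁ × R₂} :
    z ∈ pullbackGrading Z₁ Z₂ u v n ↔ (z.1 ∈ Z₁ n ∧ z.2 ∈ Z₂ n) ∧ u z.1 = v z.2 := by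
  simp [pullbackGrading, Submodule.mem_prod]

variable [SetLike.GradedMonoid Z₁] [SetLike.GradedMonoid Z₂]

instance : SetLike.GradedMonoid (pullbackGrading Z₁ Z₂ u v) where
  one_mem := mem_pullbackGrading.2
    ⟨⟨SetLike.GradedOne.one_mem, SetLike.GradedOne.one_mem⟩, by simp⟩
  mul_mem i j z w hz hw := by
    rw [mem_pullbackGrading] at hz hw ⊢
    obtain ⟨⟨hz₁, hz₂⟩, huv⟩ := hz
    obtain ⟨⟨hw₁, hw₂⟩, huv'⟩ := hw
    exact ⟨⟨SetLike.GradedMul.mul_mem hz₁ hw₁, SetLike.GradedMul.mul_mem hz₂ hw₂⟩,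
      by simp [huv, huv']⟩

theorem IsPreCDGA.pullback {d₁ : R₁ →ₗ[ℚ] R₁} {d₂ : R₂ →ₗ[ℚ] R₂} (P₁ : IsPreCDGA Z₁ d₁)
    (P₂ : IsPreCDGA Z₂ d₂) (hd : ∀ a b, u a = v b → u (d₁ a) = v (d₂ b)) :
    IsPreCDGA (pullbackGrading Z₁ Z₂ u v) (d₁.prodMap d₂) where
  gcomm hz hw :=
    have hz := (mem_pullbackGrading.1 hz).1
    have hw := (mem_pullbackGrading.1 hw).1
    Prod.ext (P₁.gcomm hz.1 hw.1) (P₂.gcomm hz.2 hw.2)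
  d_mem hz := by
    obtain ⟨⟨hz₁, hz₂⟩, huv⟩ := mem_pullbackGrading.1 hz
    exact mem_pullbackGrading.2 ⟨⟨P₁.d_mem hz₁, P₂.d_mem hz₂⟩, hd _ _ huv⟩
  d_sq hz :=
    have hz := (mem_pullbackGrading.1 hz).1
    Prod.ext (P₁.d_sq hz.1) (P₂.d_sq hz.2)
  leibniz hz hw :=
    have hz := (mem_pullbackGrading.1 hz).1
    have hw := (mem_pullbackGrading.1 hw).1
    Prod.ext (P₁.leibniz hz.1 hw.1) (P₂.leibniz hz.2 hw.2)

end Pullback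

theorem CDGA.proj_add_map {X Y : CDGA} {k : ℤ} {f : X.carrier →ₗ[ℚ] Y.carrier}
    (hf : ∀ {m x}, x ∈ X.grading m → f x ∈ Y.grading (m + k)) (n : ℤ) (x : X.carrier) :
    GradedAlgebra.proj Y.grading (n + k) (f x) = f (GradedAlgebra.proj X.grading n x) := by
  have : ⨆ m, X.grading m ≤ LinearMap.eqLocus (GradedAlgebra.proj Y.grading (n + k) ∘ₗ f)
      (f ∘ₗ GradedAlgebra.proj X.grading n) := by
    refine iSup_le fun m x hx => ?_
    by_cases hmn : m = n
    · subst hmn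
      simp [proj_of_mem hx, proj_of_mem (hf hx)]
    · have hmn' : m + k ≠ n + k := by simpa using hmn
      simp [proj_of_mem_of_ne hx hmn, proj_of_mem_of_ne (hf hx) hmn']
  rw [X.internal.submodule_iSup_eq_top] at this
  exact this Submodule.mem_top

theorem CDGA.proj_d (A : CDGA) (n : ℤ) (a : A.carrier) :
    GradedAlgebra.proj A.grading (n + 1) (A.d a) = A.d (GradedAlgebra.proj A.grading n a) :=
  proj_add_map A.d_mem n a

theorem CDGAHom.map_proj {X Y : CDGA} (f : CDGAHom X Y) (n : ℤ) (x : X.carrier) :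
    f.toFun (GradedAlgebra.proj X.grading n x) = GradedAlgebra.proj Y.grading n (f.toFun x) := by
  simpa using (CDGA.proj_add_map (k := 0) (f := f.toFun.toLinearMap)
    (fun hx => by simpa using f.map_grading _ _ hx) n x).symm

/-- The identity morphism of a cdga. -/
def CDGAHom.id (A : CDGA) : CDGAHom A A where
  toFun := AlgHom.id ℚ A.carrier
  map_grading _ _ hx := hx
  comm_d _ := rfl

/-- The composition of two morphisms of cdgas. -/
def CDGAHom.comp {X Y W : CDGA} (h : CDGAHom Y W) (f : CDGAHom X Y) : CDGAHom X W where
  toFun := h.toFun.comp f.toFun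
  map_grading n x hx := h.map_grading n _ (f.map_grading n x hx)
  comm_d x := by rw [AlgHom.comp_apply, AlgHom.comp_apply, f.comm_d, h.comm_d]

theorem CDGA.exists_mem_grading_d_eq {A : CDGA} {n : ℤ} {z : A.carrier}
    (hz : z ∈ A.grading (n + 1)) (h : z ∈ LinearMap.range A.d) : ∃ y ∈ A.grading n, A.d y = z := by
  obtain ⟨y, rfl⟩ := h
  refine ⟨GradedAlgebra.proj A.grading n y, SetLike.coe_mem _, ?_⟩
  rw [← A.proj_d, CDGA.proj_of_mem hz]

namespace CDGAHom

variable {X Y : CDGA} {f : CDGAHom X Y}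

namespace IsQuasiIso

theorem id (A : CDGA) : (CDGAHom.id A).IsQuasiIso :=
  ⟨fun _ _ h => h, fun y hy => ⟨y, hy, by simp [CDGAHom.id]⟩⟩

theorem exists_homogeneous_sub_eq_d (hf : f.IsQuasiIso) {n : ℤ} {y : Y.carrier}
    (hy : y ∈ Y.grading n) (hdy : Y.d y = 0) :
    ∃ x ∈ X.grading n, X.d x = 0 ∧ ∃ b ∈ Y.grading (n - 1), f.toFun x - y = Y.d b := by
  obtain ⟨x, hdx, b, hb⟩ := hf.2 y hdy
  refine ⟨GradedAlgebra.proj X.grading n x, SetLike.coe_mem _, ?_,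
    GradedAlgebra.proj Y.grading (n - 1) b, SetLike.coe_mem _, ?_⟩
  · rw [← X.proj_d, hdx, map_zero]
  · rw [← Y.proj_d, sub_add_cancel, hb, map_sub, CDGA.proj_of_mem hy, f.map_proj]

theorem exists_relative_primitive (hf : f.IsQuasiIso) {n : ℤ} {x : X.carrier}
    {w : Y.carrier} (hx : x ∈ X.grading (n + 1)) (hw : w ∈ Y.grading n) (hdx : X.d x = 0)
    (hxw : f.toFun x + Y.d w = 0) :
    ∃ x' ∈ X.grading n, ∃ b ∈ Y.grading (n - 1), X.d x' = x ∧ f.toFun x' + w + Y.d b = 0 := by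
  have hfx : f.toFun x ∈ LinearMap.range Y.d :=
    ⟨-w, by rw [map_neg]; exact (eq_neg_of_add_eq_zero_left hxw).symm⟩
  obtain ⟨u, hu, rfl⟩ := CDGA.exists_mem_grading_d_eq hx (hf.1 x hdx hfx)
  obtain ⟨v, hv, hdv, b, hb, hvb⟩ := hf.exists_homogeneous_sub_eq_d
    (add_mem (f.map_grading _ _ hu) hw) (by rw [map_add, ← f.comm_d, hxw])
  refine ⟨u - v, sub_mem hu hv, b, hb, by rw [map_sub, hdv, sub_zero], ?_⟩
  rw [← hvb, map_sub]
  abel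

theorem isTrivialFibration (hf : f.IsQuasiIso) (hd : Y.d = 0) :
    IsTrivialFibration X.grading X.d f.toFun where
  comm_d _ := f.comm_d _
  exists_map_eq hy := by
    obtain ⟨x, hx, -, b, -, hb⟩ := hf.exists_homogeneous_sub_eq_d hy (by simp [hd])
    exact ⟨x, hx, sub_eq_zero.1 (by simpa [hd] using hb)⟩
  exists_d_eq hz hdz hfz := by
    obtain ⟨x, hx, b, -, rfl, hxb⟩ :=
      hf.exists_relative_primitive hz (zero_mem _) hdz (by simp [hfz])
    exact ⟨x, hx, rfl, by simpa [hd] using hxb⟩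

theorem comp {W : CDGA} {f : CDGAHom X Y} {h : CDGAHom Y W} (hh : h.IsQuasiIso)
    (hf : f.IsQuasiIso) : (h.comp f).IsQuasiIso := by
  refine ⟨fun x hx hr => hf.1 x hx (hh.1 _ (by rw [← f.comm_d, hx, map_zero]) hr), fun w hw => ?_⟩
  obtain ⟨y, hy, b, hb⟩ := hh.2 w hw
  obtain ⟨x, hx, c, hc⟩ := hf.2 y hy
  refine ⟨x, hx, b + h.toFun c, ?_⟩
  rw [map_add, ← h.comm_d, hc, hb]
  simp [CDGAHom.comp]

theorem of_comp {A : CDGA} {φ : CDGAHom A Y} {ψ : CDGAHom A X} (hf : f.IsQuasiIso)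
    (hφ : φ.IsQuasiIso) (h : ∀ a, A.d a = 0 → ∃ b, φ.toFun a = f.toFun (ψ.toFun a) + Y.d b) :
    ψ.IsQuasiIso := by
  refine ⟨?_, fun x hx => ?_⟩
  · rintro a ha ⟨x, hx⟩
    obtain ⟨b, hb⟩ := h a ha
    exact hφ.1 a ha ⟨f.toFun x + b, by rw [hb, map_add, ← hx, f.comm_d]⟩
  · obtain ⟨a, ha, c, hc⟩ := hφ.2 (f.toFun x) (by rw [← f.comm_d, hx, map_zero])
    obtain ⟨b, hb⟩ := h a ha
    refine ⟨a, ha, hf.1 _ ?_ ⟨c - b, ?_⟩⟩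
    · rw [map_sub, hx, sub_zero, ← ψ.comm_d, ha, map_zero]
    · rw [map_sub, map_sub, hc, hb]
      abel

end IsQuasiIso

section PathObject

open Polynomial

/-- The degree-`n` part of the path object of `f`: pairs of an element `x` of `X` and a polynomial
form `p + dt q` with values in `Y` such that `p(0) = f x`. -/
noncomputable abbrev pathGrading (f : CDGAHom X Y) : ℤ →
    Submodule ℚ (X.carrier × Y.carrier[X] × Matrix (Fin 2) (Fin 2) Y.carrier[X]) :=
  pullbackGrading X.grading (dtGrading (polynomialGrading Y.grading)) f.toFun
    ((evalRat 0).comp (AlgHom.fst ℚ _ _))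

/-- The differential of the path object. -/
noncomputable def pathDifferential (X Y : CDGA) :
    X.carrier × Y.carrier[X] × Matrix (Fin 2) (Fin 2) Y.carrier[X] →ₗ[ℚ]
      X.carrier × Y.carrier[X] × Matrix (Fin 2) (Fin 2) Y.carrier[X] :=
  X.d.prodMap (dtDifferential (coeffwise Y.d) (derivative.restrictScalars ℚ))

/-- The endpoint `p(1)` of the path `(x, p + dt q)`. -/
noncomputable def pathEndpoint (X Y : CDGA) :
    X.carrier × Y.carrier[X] × Matrix (Fin 2) (Fin 2) Y.carrier[X] →ₐ[ℚ] Y.carrier :=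
  (evalRat 1).comp ((AlgHom.fst ℚ _ _).comp (AlgHom.snd ℚ _ _))

theorem isPreCDGA_path (f : CDGAHom X Y) : IsPreCDGA f.pathGrading (pathDifferential X Y) := by
  refine X.isPreCDGA.pullback (Y.isPreCDGA.polynomial.adjoinDt derivative_mem_polynomialGrading
    (fun p => coeffwise_derivative Y.d p) fun p q => derivative_mul) fun x ω h => ?_
  rw [f.comm_d, h]
  exact (evalRat_coeffwise 0 Y.d ω.1).symm

theorem IsQuasiIso.exists_pathDifferential_eq (hf : f.IsQuasiIso) {n : ℤ}
    {z : X.carrier × Y.carrier[X] × Matrix (Fin 2) (Fin 2) Y.carrier[X]}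
    (hz : z ∈ f.pathGrading (n + 1)) (hdz : pathDifferential X Y z = 0)
    (hez : pathEndpoint X Y z = 0) :
    ∃ z' ∈ f.pathGrading n, pathDifferential X Y z' = z ∧ pathEndpoint X Y z' = 0 := by
  obtain ⟨x, ω⟩ := z
  obtain ⟨⟨hx, hω⟩, hxω⟩ := mem_pullbackGrading.1 hz
  obtain ⟨p, -, q, hq, rfl⟩ := mem_dtGrading.1 hω
  rw [add_sub_cancel_right] at hq
  obtain ⟨hdx, hdω⟩ := Prod.ext_iff.1 hdz
  change dtDifferential _ _ (dtForm (n + 1) (p, q)) = 0 at hdω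
  replace hxω : f.toFun x = p.coeff 0 := hxω.trans (evalRat_zero p)
  rw [dtDifferential_dtForm, map_eq_zero_iff _ (dtForm_injective _)] at hdω
  have hpq : p = C (f.toFun x) + coeffwise Y.d (antiderivative q) := by
    rw [hxω]
    exact eq_C_add_of_coeffwise_eq_derivative (sub_eq_zero.1 (Prod.ext_iff.1 hdω).2)
  have hend : f.toFun x + Y.d (evalRat 1 (antiderivative q)) = 0 := by
    rw [← evalRat_coeffwise, ← evalRat_C 1 (f.toFun x), ← map_add, ← hpq]
    exact hez
  obtain ⟨x', hx', b, hb, rfl, hxb⟩ := hf.exists_relative_primitive hx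
    (evalRat_mem (antiderivative_mem_polynomialGrading hq) 1) hdx hend
  have hdb : Y.d b ∈ Y.grading n := by simpa using Y.d_mem hb
  -- the term `t db` moves the endpoint to zero, and `dt b` compensates its derivative
  refine ⟨(x', dtForm n (C (f.toFun x') + antiderivative q + monomial 1 (Y.d b), C b)),
    mem_pullbackGrading.2 ⟨⟨hx', mem_dtGrading.2 ⟨_, ?_, _, ?_, rfl⟩⟩, ?_⟩, ?_, ?_⟩
  · exact add_mem (add_mem (monomial_mem_polynomialGrading (f.map_grading _ _ hx') 0)
      (antiderivative_mem_polynomialGrading hq)) (monomial_mem_polynomialGrading hdb 1)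
  · exact monomial_mem_polynomialGrading hb 0
  · simp [dtForm_fst, evalRat_zero, coeff_antiderivative_zero, coeff_monomial]
  · refine Prod.ext rfl ((dtDifferential_dtForm _ _ _ _ _).trans ?_)
    congr 2
    · rw [map_add, map_add, coeffwise_C, coeffwise_monomial, Y.d_sq, monomial_zero_right,
        add_zero, ← f.comm_d, ← hpq]
    · simp [derivative_antiderivative, coeffwise_C]
  · change evalRat 1 (C (f.toFun x') + antiderivative q + monomial 1 (Y.d b)) = 0
    rw [map_add, map_add, evalRat_C, evalRat_monomial, one_pow, one_smul, hxb]

theorem IsQuasiIso.isTrivialFibration_pathEndpoint (hf : f.IsQuasiIso) :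
    IsTrivialFibration f.pathGrading (pathDifferential X Y) (pathEndpoint X Y) where
  comm_d _ := evalRat_coeffwise 1 Y.d _
  exists_map_eq {n y} hy := by
    refine ⟨(0, dtForm n (monomial 1 y, 0)), mem_pullbackGrading.2 ⟨⟨zero_mem _, ?_⟩, ?_⟩, ?_⟩
    · exact mem_dtGrading.2 ⟨_, monomial_mem_polynomialGrading hy 1, 0, zero_mem _, rfl⟩
    · simp [dtForm_fst, evalRat_monomial]
    · simp [pathEndpoint, dtForm_fst, evalRat_monomial]
  exists_d_eq hz hdz hez := hf.exists_pathDifferential_eq hz hdz hez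

end PathObject

end CDGAHom

namespace CDGA.FreeOn

variable {A : CDGA} {ι : Type} [LinearOrder ι] {deg : ι → ℤ} {g : ι → A.carrier}

theorem exists_rescale (F : A.FreeOn deg g) {B : CDGA} (φ : CDGAHom A B) (hB : B.d = 0) {c : ℚ}
    (hc : c ≠ 0) : ∃ φ' : CDGAHom A B, ∀ n, ∀ a ∈ A.grading n, φ'.toFun a = c ^ n • φ.toFun a := by
  have koszul : KoszulCommute deg fun x => c ^ deg x • φ.toFun (g x) := fun x y => by
    rw [smul_mul_smul_comm, smul_mul_smul_comm, ← map_mul, ← map_mul, F.koszulCommute x y, map_smul,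
      smul_comm, mul_comm (c ^ deg x)]
  obtain ⟨Φ, hΦ⟩ := F.exists_algHom koszul
  have hΦφ (n : ℤ) (a : A.carrier) (ha : a ∈ A.grading n) : Φ a = c ^ n • φ.toFun a := by
    refine F.grading_le_of_gen_mem (N := n)
      (P := fun i => LinearMap.eqLocus Φ.toLinearMap (c ^ i • φ.toFun.toLinearMap)) (by simp)
      (fun x _ => hΦ x) (fun {i j a b} _ _ _ ha hb => ?_) le_rfl ha
    simp only [LinearMap.mem_eqLocus, AlgHom.toLinearMap_apply, LinearMap.smul_apply,
      map_mul] at ha hb ⊢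
    rw [ha, hb, smul_mul_smul_comm, zpow_add₀ hc]
  have hΦd : ⨆ n, A.grading n ≤ LinearMap.ker (Φ.toLinearMap ∘ₗ A.d) :=
    iSup_le fun n a ha => by simp [hΦφ _ _ (A.d_mem ha), φ.comm_d, hB]
  rw [A.internal.submodule_iSup_eq_top] at hΦd
  refine ⟨⟨Φ, fun n a ha => ?_, fun a => ?_⟩, hΦφ⟩
  · exact hΦφ n a ha ▸ Submodule.smul_mem _ _ (φ.map_grading n a ha)
  · simpa [hB] using hΦd (Submodule.mem_top (x := a))

variable [Finite ι]

theorem exists_lift_quasiIso (F : A.FreeOn deg g) (hdec : ∀ x, A.d (g x) ∈ A.decomposables)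
    {X Y : CDGA} {f : CDGAHom X Y} (hf : f.IsQuasiIso) (φ : CDGAHom A Y) :
    ∃ ψ : CDGAHom A X, ∀ a, A.d a = 0 → ∃ b, φ.toFun a = f.toFun (ψ.toFun a) + Y.d b := by
  obtain ⟨Ψ, hmem, hd, hend⟩ :=
    F.exists_lift hdec f.isPreCDGA_path hf.isTrivialFibration_pathEndpoint φ
  refine ⟨⟨(AlgHom.fst ℚ _ _).comp Ψ, fun n a ha => (mem_pullbackGrading.1 (hmem n a ha)).1.1,
    fun a => (Prod.ext_iff.1 (hd a)).1.symm⟩, fun a ha => ⟨evalRat 1 (antiderivative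
      ((Ψ a).2.2 0 1)), ?_⟩⟩
  have hstart : f.toFun.comp ((AlgHom.fst ℚ _ _).comp Ψ) =
      ((evalRat 0).comp (AlgHom.fst ℚ _ _)).comp ((AlgHom.snd ℚ _ _).comp Ψ) :=
    F.algHom_ext fun x => (mem_pullbackGrading.1 (hmem _ _ (F.mem_grading x))).2
  have hda : CDGAHom.pathDifferential X Y (Ψ a) = 0 := by rw [hd, ha, map_zero]
  have hpq : Polynomial.derivative (Ψ a).2.1 = coeffwise Y.d ((Ψ a).2.2 0 1) :=
    sub_eq_zero.1 (congrFun₂ (congrArg (fun z => z.2.2) hda) 0 1)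
  calc φ.toFun a = evalRat 1 (Ψ a).2.1 := (DFunLike.congr_fun hend a).symm
    _ = (Ψ a).2.1.coeff 0 + Y.d (evalRat 1 (antiderivative ((Ψ a).2.2 0 1))) := by
      conv_lhs => rw [eq_C_add_of_coeffwise_eq_derivative hpq]
      rw [map_add, evalRat_C, evalRat_coeffwise]
    _ = f.toFun (Ψ a).1 + Y.d (evalRat 1 (antiderivative ((Ψ a).2.2 0 1))) := by
      rw [← evalRat_zero]
      exact congrArg (· + _) (DFunLike.congr_fun hstart a).symm

theorem exists_quasiIso_of_isFormal (F : A.FreeOn deg g)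
    (hdec : ∀ x, A.d (g x) ∈ A.decomposables) (hA : A.IsFormal) :
    ∃ (B : CDGA) (φ : CDGAHom A B), B.d = 0 ∧ φ.IsQuasiIso := by
  obtain ⟨B, hB, hAB⟩ := hA
  have transfer {X Y : CDGA} (h : CDGAConnected X Y) :
      (∃ φ : CDGAHom A X, φ.IsQuasiIso) ↔ ∃ φ : CDGAHom A Y, φ.IsQuasiIso := by
    induction h with
    | rel X Y h =>
      obtain ⟨f, hf⟩ := h
      refine ⟨fun ⟨φ, hφ⟩ => ⟨f.comp φ, hf.comp hφ⟩, fun ⟨φ, hφ⟩ => ?_⟩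
      obtain ⟨ψ, hψ⟩ := F.exists_lift_quasiIso hdec hf φ
      exact ⟨ψ, hf.of_comp hφ hψ⟩
    | refl => rfl
    | symm _ _ _ ih => exact ih.symm
    | trans _ _ _ _ _ ih₁ ih₂ => exact ih₁.trans ih₂
  obtain ⟨φ, hφ⟩ := (transfer hAB).1 ⟨.id A, .id A⟩
  exact ⟨B, φ, hB, hφ⟩

theorem exists_gradingEndomorphism (F : A.FreeOn deg g)
    (hdec : ∀ x, A.d (g x) ∈ A.decomposables) {B : CDGA} {φ : CDGAHom A B} (hB : B.d = 0)
    (hφ : φ.IsQuasiIso) {c : ℚ} (hc : c ≠ 0) :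
    ∃ α : CDGAHom A A, ∀ n, ∀ a ∈ A.grading n, φ.toFun (α.toFun a) = c ^ n • φ.toFun a := by
  obtain ⟨φ', hφ'⟩ := F.exists_rescale φ hB hc
  obtain ⟨α, hmem, hd, hα⟩ := F.exists_lift hdec A.isPreCDGA (hφ.isTrivialFibration hB) φ'
  exact ⟨⟨α, hmem, fun a => (hd a).symm⟩, fun n a ha =>
    (DFunLike.congr_fun hα a).trans (hφ' n a ha)⟩

end CDGA.FreeOn

section GeneralizedEigenspaces

open Polynomial

variable {K V : Type*} [Field K] [AddCommGroup V] [Module K V] {f : Module.End K V}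

theorem mem_maxGenEigenspace_of_sub_mem {μ : K} {x : V}
    (h : f x - μ • x ∈ f.maxGenEigenspace μ) : x ∈ f.maxGenEigenspace μ := by
  obtain ⟨k, hk⟩ := (f.mem_maxGenEigenspace μ _).1 h
  exact (f.mem_maxGenEigenspace μ _).2 ⟨k + 1, by rwa [pow_succ, Module.End.mul_apply]⟩

theorem maxGenEigenspace_induction {μ : K} {p : (x : V) → x ∈ f.maxGenEigenspace μ → Prop}
    (zero : p 0 (zero_mem _))
    (step : ∀ x hx hfx, p (f x - μ • x) hfx → p x hx) {x : V}
    (hx : x ∈ f.maxGenEigenspace μ) : p x hx := by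
  obtain ⟨k, hk⟩ := (f.mem_maxGenEigenspace μ _).1 hx
  induction k generalizing x with
  | zero =>
    obtain rfl : x = 0 := by simpa using hk
    exact zero
  | succ k ih =>
    rw [pow_succ, Module.End.mul_apply] at hk
    exact step x hx _ (ih ((f.mem_maxGenEigenspace μ _).2 ⟨k, hk⟩) hk)

theorem mul_mem_maxGenEigenspace {R : Type*} [Ring R] [Algebra K R] (α : R →ₐ[K] R) {μ ν : K}
    {x y : R} (hx : x ∈ Module.End.maxGenEigenspace α.toLinearMap μ)
    (hy : y ∈ Module.End.maxGenEigenspace α.toLinearMap ν) :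
    x * y ∈ Module.End.maxGenEigenspace α.toLinearMap (μ * ν) := by
  induction hx using maxGenEigenspace_induction generalizing y with
  | zero => simp
  | step x _ _ ihx =>
    induction hy using maxGenEigenspace_induction with
    | zero => simp
    | step y hy _ ihy =>
      have product_rule : α (x * y) - (μ * ν) • (x * y) =
          (α x - μ • x) * α y + μ • (x * (α y - ν • y)) := by
        simp only [map_mul, sub_mul, mul_sub, smul_sub, smul_mul_assoc, mul_smul_comm, smul_smul]
        abel
      have hαy := Module.End.mapsTo_maxGenEigenspace_of_comm (.refl α.toLinearMap) ν hy
      refine mem_maxGenEigenspace_of_sub_mem ?_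
      rw [AlgHom.toLinearMap_apply, product_rule]
      exact add_mem (ihx hαy) (Submodule.smul_mem _ _ ihy)

theorem ker_aeval_prod_X_sub_C_pow_le {κ : Type*} {μ : κ → K} (hμ : Function.Injective μ)
    (s : Finset κ) (n : κ → ℕ) :
    LinearMap.ker (aeval f (∏ i ∈ s, (X - C (μ i)) ^ n i)) ≤ ⨆ i, f.maxGenEigenspace (μ i) := by
  classical
  induction s using Finset.induction with
  | empty => simp [Module.End.one_eq_id]
  | insert i s hi ih =>
    have coprime : IsCoprime ((X - C (μ i)) ^ n i) (∏ j ∈ s, (X - C (μ j)) ^ n j) :=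
      IsCoprime.prod_right fun j hj => (pairwise_coprime_X_sub_C hμ
        (ne_of_mem_of_not_mem hj hi).symm).pow
    rw [Finset.prod_insert hi, ← sup_ker_aeval_eq_ker_aeval_mul_of_coprime f coprime]
    refine sup_le (fun x hx => ?_) ih
    refine le_iSup (fun i => f.maxGenEigenspace (μ i)) i
      ((f.mem_maxGenEigenspace _ _).2 ⟨n i, ?_⟩)
    simpa [Algebra.algebraMap_eq_smul_one] using hx

theorem mem_iSup_maxGenEigenspace_iff {κ : Type*} {μ : κ → K} (hμ : Function.Injective μ) {x : V} :
    x ∈ ⨆ i, f.maxGenEigenspace (μ i) ↔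
      ∃ s : Multiset κ, aeval f (s.map fun i => X - C (μ i)).prod x = 0 := by
  classical
  refine ⟨fun hx => ?_, fun ⟨s, hs⟩ => ?_⟩
  · induction hx using Submodule.iSup_induction' with
    | mem i x hx =>
      obtain ⟨k, hk⟩ := (f.mem_maxGenEigenspace _ _).1 hx
      refine ⟨Multiset.replicate k i, ?_⟩
      simpa [Algebra.algebraMap_eq_smul_one] using hk
    | zero => exact ⟨0, map_zero _⟩
    | add x y _ _ hx hy =>
      obtain ⟨s, hs⟩ := hx
      obtain ⟨t, ht⟩ := hy
      refine ⟨s + t, ?_⟩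
      rw [Multiset.map_add, Multiset.prod_add, map_add]
      nth_rw 1 [mul_comm]
      simp only [map_mul, Module.End.mul_apply, hs, ht, map_zero, add_zero]
  · rw [Finset.prod_multiset_map_count] at hs
    exact ker_aeval_prod_X_sub_C_pow_le hμ _ _ hs

theorem aeval_apply_comm {W : Type*} [AddCommGroup W] [Module K W] {f' : Module.End K W}
    {T : V →ₗ[K] W} (hT : ∀ x, T (f x) = f' (T x)) (q : K[X]) (x : V) :
    T (aeval f q x) = aeval f' q (T x) := by
  induction q using Polynomial.induction_on generalizing x with
  | C a => simp
  | add p q hp hq => simp [hp, hq]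
  | monomial n a ih => simp_all [pow_succ, ← mul_assoc]

end GeneralizedEigenspaces

theorem exists_span_range_eq_of_subset_span {K V ι : Type*} [Field K] [AddCommGroup V] [Module K V]
    [Finite ι] {g : ι → V} {T : Set V} (h0 : 0 ∈ T) (hT : T ⊆ Submodule.span K (Set.range g)) :
    ∃ g' : ι → V, (∀ i, g' i ∈ T) ∧ Submodule.span K T ≤ Submodule.span K (Set.range g') := by
  classical
  have := Fintype.ofFinite ι
  have : FiniteDimensional K (Submodule.span K (Set.range g)) :=
    .span_of_finite K (Set.finite_range g)
  have hle := Submodule.span_le.2 hT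
  have : FiniteDimensional K (Submodule.span K T) := Submodule.finiteDimensional_of_le hle
  obtain ⟨b, hbT, hb, -⟩ := Submodule.exists_fun_fin_finrank_span_eq K T
  have hcard : Fintype.card (Fin (Module.finrank K (Submodule.span K T))) ≤ Fintype.card ι := by
    rw [Fintype.card_fin]
    exact (Submodule.finrank_mono hle).trans (finrank_range_le_card g)
  obtain ⟨e⟩ := Function.Embedding.nonempty_of_card_le hcard
  refine ⟨Function.extend e b 0, fun i => ?_, ?_⟩
  · by_cases hi : ∃ j, e j = i
    · obtain ⟨j, rfl⟩ := hi
      rw [e.injective.extend_apply]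
      exact hbT j
    · rw [Function.extend_apply' _ _ _ hi]
      exact h0
  · refine hb.ge.trans (Submodule.span_mono ?_)
    rintro _ ⟨j, rfl⟩
    exact ⟨e j, e.injective.extend_apply _ _ _⟩

theorem exists_le_sup_span_range {K V ι : Type*} [Field K] [AddCommGroup V] [Module K V]
    [Finite ι] {g : ι → V} {D W : Submodule K V} {T : Set V} (h0 : 0 ∈ T)
    (hT : W = Submodule.span K T) (hg : W ≤ D ⊔ Submodule.span K (Set.range g)) :
    ∃ g' : ι → V, (∀ i, g' i ∈ T) ∧ W ≤ D ⊔ Submodule.span K (Set.range g') := by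
  subst hT
  have le_sup_iff (W : Submodule K V) (h : ι → V) :
      W ≤ D ⊔ Submodule.span K (Set.range h) ↔
        W.map D.mkQ ≤ Submodule.span K (Set.range (D.mkQ ∘ h)) := by
    rw [Submodule.map_le_iff_le_comap, Set.range_comp, ← Submodule.map_span,
      Submodule.comap_map_mkQ]
  obtain ⟨h, hhT, hh⟩ := exists_span_range_eq_of_subset_span (T := D.mkQ '' T)
    ⟨0, h0, map_zero _⟩ (Submodule.span_le.1 (by rwa [← Submodule.map_span, ← le_sup_iff]))
  choose g' hg'T hg' using hhT
  refine ⟨g', hg'T, (le_sup_iff _ _).2 ?_⟩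
  rwa [Submodule.map_span, show D.mkQ ∘ g' = h from funext hg']

section Weights

open Polynomial

variable {R : Type} [Ring R] [Algebra ℚ R]

/-- The part of weight `w` under an endomorphism `α` that is to be thought of as multiplication by
`2 ^ w` in weight `w`: the generalized eigenspace of `α` for the eigenvalue `2 ^ w`. -/
def weightSpace (α : R →ₐ[ℚ] R) (w : ℕ) : Submodule ℚ R :=
  Module.End.maxGenEigenspace α.toLinearMap (2 ^ w)

variable (α : R →ₐ[ℚ] R)

instance weightSpace.gradedMonoid : SetLike.GradedMonoid (weightSpace α) where
  one_mem := (Module.End.mem_maxGenEigenspace _ _ _).2 ⟨1, by simp⟩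
  mul_mem v w _ _ hx hy := by
    rw [weightSpace, pow_add]
    exact mul_mem_maxGenEigenspace α hx hy

theorem iSupIndep_weightSpace : iSupIndep (weightSpace α) :=
  (Module.End.independent_maxGenEigenspace α.toLinearMap).comp
    (pow_right_injective₀ two_pos (by norm_num))

/-- The sum of the parts of positive weight. -/
def positiveWeights : Submodule ℚ R := ⨆ w, weightSpace α (w + 1)

variable {α}

theorem mem_positiveWeights_iff {x : R} :
    x ∈ positiveWeights α ↔ ∃ s : Multiset ℕ,
      aeval (R := ℚ) (A := Module.End ℚ R) α.toLinearMap
        (s.map fun w => X - C (2 ^ (w + 1))).prod x = 0 :=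
  mem_iSup_maxGenEigenspace_iff ((pow_right_injective₀ two_pos (by norm_num)).comp
    (add_left_injective 1))

theorem mul_mem_positiveWeights {x y : R} (hx : x ∈ positiveWeights α)
    (hy : y ∈ positiveWeights α) : x * y ∈ positiveWeights α := by
  have hle : positiveWeights α * positiveWeights α ≤ positiveWeights α := by
    simp only [positiveWeights, Submodule.iSup_mul, Submodule.mul_iSup, iSup_le_iff,
      Submodule.mul_le]
    intro w v x hx y hy
    refine le_iSup (fun w => weightSpace α (w + 1)) (v + w + 1) ?_
    rw [show v + w + 1 + 1 = v + 1 + (w + 1) by ring]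
    exact SetLike.GradedMul.mul_mem hx hy
  exact hle (Submodule.mul_mem_mul hx hy)

theorem mapsTo_positiveWeights {α : R →ₐ[ℚ] R} {T : R →ₗ[ℚ] R} (hT : ∀ x, T (α x) = α (T x))
    {x : R} (hx : x ∈ positiveWeights α) : T x ∈ positiveWeights α := by
  obtain ⟨s, hs⟩ := mem_positiveWeights_iff.1 hx
  refine mem_positiveWeights_iff.2 ⟨s, ?_⟩
  rw [← aeval_apply_comm (f := α.toLinearMap) hT, hs, map_zero]

theorem CDGAHom.IsQuasiIso.mem_positiveWeights_of_d_mem {A B : CDGA} {φ : CDGAHom A B}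
    (hφ : φ.IsQuasiIso) {α : CDGAHom A A}
    (hα : ∀ n, ∀ a ∈ A.grading n, φ.toFun (α.toFun a) = (2 : ℚ) ^ n • φ.toFun a) {n : ℕ}
    (hlow : A.grading n ≤ positiveWeights α.toFun) {x : A.carrier} (hx : x ∈ A.grading (n + 1))
    (hdx : A.d x ∈ positiveWeights α.toFun) : x ∈ positiveWeights α.toFun := by
  obtain ⟨s, hs⟩ := mem_positiveWeights_iff.1 hdx
  set z := aeval (R := ℚ) (A := Module.End ℚ A.carrier) α.toFun.toLinearMap
    (s.map fun w => X - C (2 ^ (w + 1))).prod x with hz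
  have hzmem : z ∈ A.grading (n + 1) :=
    aeval_apply_smul_mem_of_le_comap hx _ α.toFun.toLinearMap (α.map_grading (n + 1))
  have hdz : A.d z = 0 := (aeval_apply_comm (fun a => (α.comm_d a).symm) _ x).trans hs
  have hexact : α.toFun z - (2 : ℚ) ^ (n + 1) • z ∈ LinearMap.range A.d := by
    refine hφ.1 _ ?_ ⟨0, ?_⟩
    · rw [map_sub, map_smul, ← α.comm_d, hdz, map_zero, smul_zero, sub_zero]
    · rw [map_sub, map_smul, hα _ z hzmem, map_zero]
      norm_cast
      rw [sub_self]
  obtain ⟨u, hu, hdu⟩ := CDGA.exists_mem_grading_d_eq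
    (sub_mem (α.map_grading _ _ hzmem) (Submodule.smul_mem _ _ hzmem)) hexact
  obtain ⟨t, ht⟩ := mem_positiveWeights_iff.1
    (mapsTo_positiveWeights (fun a => (α.comm_d a).symm) (hlow hu))
  refine mem_positiveWeights_iff.2 ⟨t + n ::ₘ s, ?_⟩
  have factor : aeval (R := ℚ) (A := Module.End ℚ A.carrier) α.toFun.toLinearMap
      (X - C (2 ^ (n + 1))) z = A.d u := by
    rw [hdu, map_sub, aeval_X, aeval_C]
    rfl
  rw [Multiset.map_add, Multiset.prod_add, Multiset.map_cons, Multiset.prod_cons, map_mul, map_mul,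
    Module.End.mul_apply, Module.End.mul_apply, ← hz, factor, ht]

end Weights

theorem CDGA.bijective_of_grading_le_range {A : CDGA}
    (hfin : ∀ n, FiniteDimensional ℚ (A.grading n)) {β : A.carrier →ₗ[ℚ] A.carrier}
    (hβ : ∀ {n a}, a ∈ A.grading n → β a ∈ A.grading n)
    (hrange : ∀ n, A.grading n ≤ LinearMap.range β) : Function.Bijective β := by
  have hproj (n : ℤ) (a : A.carrier) :
      GradedAlgebra.proj A.grading n (β a) = β (GradedAlgebra.proj A.grading n a) := by
    simpa using CDGA.proj_add_map (k := 0) (f := β) (fun ha => by simpa using hβ ha) n a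
  refine ⟨(injective_iff_map_eq_zero β).2 fun a ha => ?_, ?_⟩
  · have hinj (n : ℤ) : Function.Injective (β.restrict fun _ ha => hβ (n := n) ha) := by
      refine LinearMap.injective_iff_surjective.2 ?_
      rintro ⟨b, hb⟩
      obtain ⟨a, rfl⟩ := hrange n hb
      refine ⟨⟨GradedAlgebra.proj A.grading n a, SetLike.coe_mem _⟩, Subtype.ext ?_⟩
      exact (hproj n a).symm.trans (proj_of_mem hb)
    refine (DirectSum.decompose A.grading).injective (DFinsupp.ext fun n => hinj n ?_)
    rw [DirectSum.decompose_zero, DFinsupp.zero_apply, map_zero]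
    exact Subtype.ext ((hproj n a).symm.trans (by rw [ha, map_zero]; rfl))
  · rw [← LinearMap.range_eq_top, ← top_le_iff, ← A.internal.submodule_iSup_eq_top]
    exact iSup_le hrange

namespace CDGA.FreeOn

variable {A : CDGA} {ι : Type} [lo : LinearOrder ι] {deg : ι → ℤ} {g : ι → A.carrier}

theorem grading_le_decomposablesAt_sup_span (F : A.FreeOn deg g) {n : ℤ} (hn : 0 < n) :
    A.grading n ≤ A.decomposablesAt n ⊔ Submodule.span ℚ (g '' {x | deg x = n}) := by
  refine (F.grading_le_span_words n).trans (Submodule.span_le.2 ?_)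
  rintro _ ⟨_ | ⟨x, _ | ⟨y, L⟩⟩, rfl, rfl⟩
  · simp at hn
  · exact Submodule.mem_sup_right (Submodule.subset_span ⟨x, by simp, by simp⟩)
  · have := F.two_le_deg x
    have := F.two_le_deg y
    have := F.sum_map_deg_nonneg L
    refine Submodule.mem_sup_left (Submodule.subset_span ⟨deg x, ((y :: L).map deg).sum, by lia, ?_,
      by simp, g x, F.mem_grading x, ((y :: L).map g).prod, ?_, by simp⟩)
    · rw [List.map_cons, List.sum_cons]
      lia
    · exact SetLike.list_prod_map_mem_graded _ deg g fun x _ => F.mem_grading x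

theorem grading_le_positiveWeights (F : A.FreeOn deg g)
    (hdec : ∀ x, A.d (g x) ∈ A.decomposables) {B : CDGA} {φ : CDGAHom A B} (hφ : φ.IsQuasiIso)
    {α : CDGAHom A A}
    (hα : ∀ n, ∀ a ∈ A.grading n, φ.toFun (α.toFun a) = (2 : ℚ) ^ n • φ.toFun a) (n : ℕ) :
    A.grading (n + 1) ≤ positiveWeights α.toFun := by
  induction n using Nat.strong_induction_on with
  | _ n ih =>
    have low {i : ℤ} (hi : 2 ≤ i) (hin : i ≤ n) : A.grading i ≤ positiveWeights α.toFun := by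
      obtain ⟨k, rfl⟩ : ∃ k : ℕ, i = k + 1 := ⟨(i - 1).toNat, by lia⟩
      exact ih k (by lia)
    have decomposable {m : ℤ} (hm : m ≤ n + 2) :
        A.decomposablesAt m ≤ positiveWeights α.toFun :=
      F.decomposablesAt_le fun hi hj hij hx hy =>
        mul_mem_positiveWeights (low hi (by lia) hx) (low hj (by lia) hy)
    refine (F.grading_le_decomposablesAt_sup_span (by lia)).trans
      (sup_le (decomposable (by lia)) (Submodule.span_le.2 ?_))
    rintro _ ⟨x, hx : deg x = n + 1, rfl⟩
    have := F.two_le_deg x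
    have hgx := hx ▸ F.mem_grading x
    refine hφ.mem_positiveWeights_of_d_mem hα ?_ hgx
      (decomposable (by lia) (mem_decomposablesAt (A.d_mem hgx) (hdec x)))
    obtain rfl | hn : n = 1 ∨ 2 ≤ n := by lia
    · exact F.grading_one.trans_le bot_le
    · exact low (mod_cast hn) le_rfl

theorem of_bijective (F : A.FreeOn deg g) {β : A.carrier →ₐ[ℚ] A.carrier}
    (hβ : Function.Bijective β) (hmem : ∀ x, β (g x) ∈ A.grading (deg x)) :
    A.FreeOn deg (β ∘ g) := by
  have map_monomial : (fun e : AdmissibleExponent deg => monomialIn lo (β ∘ g) e.1) =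
      β.toLinearMap ∘ fun e : AdmissibleExponent deg => monomialIn lo g e.1 := by
    ext e
    simp [monomialIn, map_list_prod, Function.comp_def]
  refine ⟨F.two_le_deg, hmem, ?_, ?_⟩
  · rw [map_monomial]
    exact F.linearIndependent.map' β.toLinearMap (LinearMap.ker_eq_bot.2 hβ.1)
  · rw [map_monomial, Set.range_comp, ← Submodule.map_span, top_le_iff.1 F.top_le_span,
      Submodule.map_top, LinearMap.range_eq_top.2 hβ.2]

theorem of_grading_le [Finite ι] (F : A.FreeOn deg g) {g' : ι → A.carrier}
    (hmem : ∀ x, g' x ∈ A.grading (deg x))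
    (hle : ∀ n, 0 < n →
      A.grading n ≤ A.decomposablesAt n ⊔ Submodule.span ℚ (g' '' {x | deg x = n})) :
    A.FreeOn deg g' := by
  obtain ⟨β, hβ⟩ := F.exists_algHom fun x y => A.gcomm (hmem x) (hmem y)
  have hβg : β ∘ g = g' := funext hβ
  have hβmem {n a} : a ∈ A.grading n → β a ∈ A.grading n :=
    F.map_mem_graded A.grading fun x => by rw [hβ]; exact hmem x
  have hrange (N : ℕ) (n : ℤ) (hn : n < N) : A.grading n ≤ LinearMap.range β.toLinearMap := by
    induction N generalizing n with
    | zero => exact (A.nonneg n hn).trans_le bot_le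
    | succ N ih =>
      obtain hn0 | rfl | hn0 := lt_trichotomy n 0
      · exact (A.nonneg n hn0).trans_le bot_le
      · refine (F.grading_le_span_words 0).trans (Submodule.span_le.2 ?_)
        rintro _ ⟨L, hL : (L.map deg).sum = 0, rfl⟩
        obtain rfl : L = [] := by
          have := F.length_le_sum_map_deg L
          exact List.length_eq_zero_iff.1 (by lia)
        exact ⟨1, map_one β⟩
      · refine (hle n hn0).trans (sup_le ?_ (Submodule.span_le.2 ?_))
        · refine F.decomposablesAt_le fun hi hj hij hx hy => ?_
          obtain ⟨x, rfl⟩ := ih _ (by lia) hx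
          obtain ⟨y, rfl⟩ := ih _ (by lia) hy
          exact ⟨x * y, map_mul β x y⟩
        · rintro _ ⟨x, -, rfl⟩
          exact ⟨g x, hβ x⟩
  exact hβg ▸ F.of_bijective (bijective_of_grading_le_range F.finiteDimensional_grading hβmem
    fun n => hrange (n.toNat + 1) n (by lia)) fun x => by rw [hβ]; exact hmem x

theorem grading_eq_span_weightVectors (F : A.FreeOn deg g)
    (hdec : ∀ x, A.d (g x) ∈ A.decomposables) {B : CDGA} {φ : CDGAHom A B} (hφ : φ.IsQuasiIso)
    {α : CDGAHom A A}
    (hα : ∀ n, ∀ a ∈ A.grading n, φ.toFun (α.toFun a) = (2 : ℚ) ^ n • φ.toFun a) {n : ℤ}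
    (hn : 0 < n) :
    A.grading n =
      Submodule.span ℚ {a | a ∈ A.grading n ∧ ∃ w, a ∈ weightSpace α.toFun (w + 1)} := by
  refine le_antisymm (fun a ha => ?_) (Submodule.span_le.2 fun a ha => ha.1)
  obtain ⟨k, rfl⟩ : ∃ k : ℕ, n = k + 1 := ⟨(n - 1).toNat, by lia⟩
  have hproj : positiveWeights α.toFun ≤ (Submodule.span ℚ {a | a ∈ A.grading (k + 1) ∧
      ∃ w, a ∈ weightSpace α.toFun (w + 1)}).comap (GradedAlgebra.proj A.grading (k + 1)) := by
    refine iSup_le fun w b hb => Submodule.subset_span ⟨SetLike.coe_mem _, w, ?_⟩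
    have comm : Commute α.toFun.toLinearMap (GradedAlgebra.proj A.grading (k + 1)) :=
      LinearMap.ext fun x => α.map_proj _ x
    exact Module.End.mapsTo_maxGenEigenspace_of_comm comm _ hb
  simpa [proj_of_mem ha] using hproj (F.grading_le_positiveWeights hdec hφ hα k ha)

theorem exists_weight_generators [Finite ι] (F : A.FreeOn deg g)
    (hdec : ∀ x, A.d (g x) ∈ A.decomposables) {B : CDGA} {φ : CDGAHom A B} (hφ : φ.IsQuasiIso)
    {α : CDGAHom A A}
    (hα : ∀ n, ∀ a ∈ A.grading n, φ.toFun (α.toFun a) = (2 : ℚ) ^ n • φ.toFun a) :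
    ∃ (g' : ι → A.carrier) (w : ι → ℕ), A.FreeOn deg g' ∧ (∀ x, 0 < w x) ∧
      ∀ x, g' x ∈ weightSpace α.toFun (w x) := by
  have exists_gens (n : ℤ) : ∃ h : {x // deg x = n} → A.carrier,
      (∀ x, h x ∈ A.grading n ∧ ∃ w, h x ∈ weightSpace α.toFun (w + 1)) ∧
      (0 < n → A.grading n ≤ A.decomposablesAt n ⊔ Submodule.span ℚ (Set.range h)) := by
    have zero_weight : ∃ w, (0 : A.carrier) ∈ weightSpace α.toFun (w + 1) := ⟨0, zero_mem _⟩
    by_cases hn : 0 < n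
    · obtain ⟨h, hmem, hle⟩ := exists_le_sup_span_range
        (T := {a | a ∈ A.grading n ∧ ∃ w, a ∈ weightSpace α.toFun (w + 1)})
        ⟨zero_mem _, zero_weight⟩
        (F.grading_eq_span_weightVectors hdec hφ hα hn) (D := A.decomposablesAt n)
        (g := fun x : {x // deg x = n} => g x)
        ((F.grading_le_decomposablesAt_sup_span hn).trans_eq (by rw [Set.image_eq_range]; rfl))
      exact ⟨h, hmem, fun _ => hle⟩
    · exact ⟨0, fun _ => ⟨zero_mem _, zero_weight⟩, fun h => absurd h hn⟩
  choose h hmem hle using exists_gens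
  choose w hw using fun x => (hmem (deg x) ⟨x, rfl⟩).2
  refine ⟨fun x => h (deg x) ⟨x, rfl⟩, fun x => w x + 1, F.of_grading_le
    (fun x => (hmem _ _).1) (fun n hn => (hle n hn).trans (sup_le_sup_left
      (Submodule.span_mono ?_) _)), fun x => Nat.succ_pos _, hw⟩
  rintro _ ⟨⟨x, rfl⟩, rfl⟩
  exact ⟨x, rfl, rfl⟩

end CDGA.FreeOn

open Module (finrank)

theorem finrank_map_add_finrank_inf_ker {K V W : Type*} [Field K] [AddCommGroup V] [Module K V]
    [AddCommGroup W] [Module K W] (f : V →ₗ[K] W) (P : Submodule K V) [FiniteDimensional K P] :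
    finrank K (P.map f) + finrank K (P ⊓ LinearMap.ker f : Submodule K V) = finrank K P := by
  rw [← (f.domRestrict P).finrank_range_add_finrank_ker, LinearMap.range_domRestrict,
    LinearMap.ker_domRestrict, ← Submodule.finrank_map_subtype_eq P, Submodule.map_comap_subtype]

theorem exists_weight_projection {R : Type} [Ring R] [Algebra ℚ R] {α : R →ₐ[ℚ] R}
    (htop : ⨆ w, weightSpace α w = ⊤) (v : ℕ) :
    ∃ π : R →ₗ[ℚ] R, (∀ x, π x ∈ weightSpace α v) ∧ (∀ x ∈ weightSpace α v, π x = x) ∧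
      (∀ w ≠ v, ∀ x ∈ weightSpace α w, π x = 0) ∧
      ∀ T : R →ₗ[ℚ] R, (∀ x, T (α x) = α (T x)) → ∀ x, π (T x) = T (π x) := by
  have internal := DirectSum.isInternal_submodule_of_iSupIndep_of_iSup_eq_top
    (iSupIndep_weightSpace α) htop
  let : GradedAlgebra (weightSpace α) :=
    { weightSpace.gradedMonoid α, internal.chooseDecomposition with }
  have fixes {w : ℕ} {x : R} (hx : x ∈ weightSpace α w) :
      GradedAlgebra.proj (weightSpace α) w x = x := by
    rw [GradedAlgebra.proj_apply, DirectSum.decompose_of_mem_same _ hx]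
  have kills {w : ℕ} (hw : w ≠ v) {x : R} (hx : x ∈ weightSpace α w) :
      GradedAlgebra.proj (weightSpace α) v x = 0 := by
    rw [GradedAlgebra.proj_apply, DirectSum.decompose_of_mem_ne _ hx hw]
  refine ⟨GradedAlgebra.proj (weightSpace α) v, fun x => SetLike.coe_mem _, fun x => fixes,
    fun w hw x => kills hw, fun T hT x => ?_⟩
  have hx : x ∈ ⨆ w, weightSpace α w := htop ▸ Submodule.mem_top
  induction hx using Submodule.iSup_induction' with
  | zero => simp
  | add x y _ _ hx hy => simp only [map_add, hx, hy]
  | mem w x hx =>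
    have hTx : T x ∈ weightSpace α w :=
      Module.End.mapsTo_maxGenEigenspace_of_comm (f := α.toLinearMap)
        (LinearMap.ext fun x => (hT x).symm) _ hx
    obtain rfl | hw := eq_or_ne w v
    · rw [fixes hx, fixes hTx]
    · rw [kills hw hx, kills hw hTx, map_zero]

theorem sum_range_negOnePow_mul_of_eq_add {f r : ℤ → ℤ} {v N : ℕ} {b : ℤ} (hv : v ≤ N)
    (hf : ∀ n, f n = r n + r (n - 1) + if n = v then b else 0) (hr : r (-1) = 0) (hN : r N = 0) :
    ∑ n ∈ Finset.range (N + 1), (-1 : ℤ) ^ n * f n = (-1) ^ v * b := by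
  have telescope (n : ℕ) : (-1 : ℤ) ^ n * f n =
      ((-1) ^ n * r (n - 1) - (-1) ^ (n + 1) * r ((n + 1 : ℕ) - 1)) +
        if n = v then (-1) ^ v * b else 0 := by
    rw [hf, Nat.cast_succ, add_sub_cancel_right]
    simp only [Nat.cast_inj]
    split_ifs with hn
    · subst hn
      ring
    · ring
  rw [Finset.sum_congr rfl fun n _ => telescope n, Finset.sum_add_distrib,
    Finset.sum_range_sub' (fun n : ℕ => (-1 : ℤ) ^ n * r (n - 1)), Finset.sum_ite_eq',
    if_pos (Finset.mem_range.2 (by lia)), Nat.cast_succ, add_sub_cancel_right, hN, Nat.cast_zero,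
    zero_sub, hr, mul_zero, mul_zero, sub_zero, zero_add]

/-- The part of weight `v` and degree `n` of a cdga, for the weights given by `α`. -/
def CDGA.weightPiece (A : CDGA) (α : A.carrier →ₐ[ℚ] A.carrier) (v : ℕ) (n : ℤ) :
    Submodule ℚ A.carrier :=
  weightSpace α v ⊓ A.grading n

section Bigraded

variable {A : CDGA} {α : CDGAHom A A}

theorem CDGAHom.d_mem_weightPiece {v : ℕ} {n : ℤ} {x : A.carrier}
    (hx : x ∈ A.weightPiece α.toFun v n) : A.d x ∈ A.weightPiece α.toFun v (n + 1) :=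
  ⟨Module.End.mapsTo_maxGenEigenspace_of_comm (f := α.toFun.toLinearMap)
    (LinearMap.ext fun x => α.comm_d x) _ hx.1, A.d_mem hx.2⟩

theorem CDGAHom.exists_mem_weightPiece_d_eq (htop : ⨆ w, weightSpace α.toFun w = ⊤) {v : ℕ}
    {n : ℤ} {z : A.carrier} (hz : z ∈ A.weightPiece α.toFun v (n + 1))
    (hdz : z ∈ LinearMap.range A.d) : ∃ y ∈ A.weightPiece α.toFun v n, A.d y = z := by
  obtain ⟨π, hmem, hfix, -, hcomm⟩ := exists_weight_projection htop v
  obtain ⟨y, hy, rfl⟩ := CDGA.exists_mem_grading_d_eq hz.2 hdz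
  refine ⟨π y, ⟨hmem y, ?_⟩, ?_⟩
  · rw [← CDGA.proj_of_mem hy, hcomm _ fun x => (α.map_proj n x).symm]
    exact SetLike.coe_mem _
  · rw [← hcomm _ fun x => (α.comm_d x).symm, hfix _ hz.1]

variable {B : CDGA} {φ : CDGAHom A B}

theorem CDGAHom.map_eq_zero_of_mem_weightPiece
    (hα : ∀ n, ∀ a ∈ A.grading n, φ.toFun (α.toFun a) = (2 : ℚ) ^ n • φ.toFun a) {v : ℕ} {n : ℤ}
    (hvn : n ≠ v) {x : A.carrier} (hx : x ∈ A.weightPiece α.toFun v n) : φ.toFun x = 0 := by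
  obtain ⟨hxv, hxn⟩ := hx
  rw [weightSpace] at hxv
  induction hxv using maxGenEigenspace_induction with
  | zero => exact map_zero _
  | step x _ _ ih =>
    have hφ := ih (sub_mem (α.map_grading n x hxn) (Submodule.smul_mem _ _ hxn))
    rw [map_sub, map_smul, AlgHom.toLinearMap_apply, hα n x hxn, ← sub_smul, smul_eq_zero,
      sub_eq_zero, ← zpow_natCast] at hφ
    exact hφ.resolve_left fun h => hvn (zpow_right_injective₀ two_pos (by norm_num) h)

theorem CDGAHom.exists_mem_weightPiece_map_eq
    (hα : ∀ n, ∀ a ∈ A.grading n, φ.toFun (α.toFun a) = (2 : ℚ) ^ n • φ.toFun a)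
    (htop : ⨆ w, weightSpace α.toFun w = ⊤) {v : ℕ} {x : A.carrier} (hx : x ∈ A.grading v) :
    ∃ y ∈ A.weightPiece α.toFun v v, φ.toFun y = φ.toFun x ∧ (A.d x = 0 → A.d y = 0) := by
  obtain ⟨π, hmem, hfix, hkill, hcomm⟩ := exists_weight_projection htop v
  have hprojπ (x : A.carrier) :
      GradedAlgebra.proj A.grading v (π x) = π (GradedAlgebra.proj A.grading v x) :=
    (hcomm _ (fun x => (α.map_proj v x).symm) x).symm
  refine ⟨π x, ⟨hmem x, ?_⟩, ?_, fun hdx => ?_⟩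
  · rw [← CDGA.proj_of_mem hx, ← hprojπ]
    exact SetLike.coe_mem _
  · have hφ (y : A.carrier) : φ.toFun (GradedAlgebra.proj A.grading v (π y)) =
        φ.toFun (GradedAlgebra.proj A.grading v y) := by
      have hy : y ∈ ⨆ w, weightSpace α.toFun w := htop ▸ Submodule.mem_top
      induction hy using Submodule.iSup_induction' with
      | zero => simp
      | add y z _ _ hy hz => simp only [map_add, hy, hz]
      | mem w y hy =>
        obtain rfl | hwv := eq_or_ne w v
        · rw [hfix y hy]
        · have hproj : GradedAlgebra.proj A.grading v y ∈ A.weightPiece α.toFun w v :=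
            ⟨Module.End.mapsTo_maxGenEigenspace_of_comm (f := α.toFun.toLinearMap)
              (LinearMap.ext fun x => α.map_proj _ x) _ hy, SetLike.coe_mem _⟩
          rw [hkill w hwv y hy, map_zero, map_zero,
            map_eq_zero_of_mem_weightPiece hα (by exact_mod_cast hwv.symm) hproj]
    have := hφ x
    rwa [hprojπ, CDGA.proj_of_mem hx] at this
  · rw [← hcomm _ fun x => (α.comm_d x).symm, hdx, map_zero]

theorem CDGAHom.IsQuasiIso.map_d_weightPiece (hB : B.d = 0) (hφ : φ.IsQuasiIso)
    (htop : ⨆ w, weightSpace α.toFun w = ⊤) (v : ℕ) (n : ℤ) :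
    (A.weightPiece α.toFun v n).map A.d =
      A.weightPiece α.toFun v (n + 1) ⊓ LinearMap.ker A.d ⊓ LinearMap.ker φ.toFun.toLinearMap := by
  refine le_antisymm ?_ ?_
  · rintro _ ⟨x, hx, rfl⟩
    refine ⟨⟨d_mem_weightPiece hx, A.d_sq x⟩, ?_⟩
    exact (φ.comm_d x).trans (by rw [hB, LinearMap.zero_apply])
  · rintro z ⟨⟨hz, hdz⟩, hφz⟩
    exact exists_mem_weightPiece_d_eq htop hz (hφ.1 z hdz ⟨0, (map_zero _).trans hφz.symm⟩)

theorem CDGAHom.IsQuasiIso.map_weightPiece_inf_ker (hB : B.d = 0) (hφ : φ.IsQuasiIso)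
    (hα : ∀ n, ∀ a ∈ A.grading n, φ.toFun (α.toFun a) = (2 : ℚ) ^ n • φ.toFun a)
    (htop : ⨆ w, weightSpace α.toFun w = ⊤) (v : ℕ) (n : ℤ) :
    (A.weightPiece α.toFun v n ⊓ LinearMap.ker A.d).map φ.toFun.toLinearMap =
      if n = v then B.grading v else ⊥ := by
  split_ifs with hn
  · subst hn
    refine le_antisymm ?_ fun b hb => ?_
    · rintro _ ⟨x, ⟨⟨-, hx⟩, -⟩, rfl⟩
      exact φ.map_grading _ x hx
    · obtain ⟨x, hx, hdx, c, -, hxb⟩ := hφ.exists_homogeneous_sub_eq_d hb (by simp [hB])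
      obtain ⟨y, hy, hyx, hdy⟩ := exists_mem_weightPiece_map_eq hα htop hx
      refine ⟨y, ⟨hy, hdy hdx⟩, hyx.trans (sub_eq_zero.1 ?_)⟩
      rw [hxb, hB, LinearMap.zero_apply]
  · refine eq_bot_iff.2 ?_
    rintro _ ⟨x, ⟨hx, -⟩, rfl⟩
    exact map_eq_zero_of_mem_weightPiece hα hn hx

theorem CDGAHom.IsQuasiIso.finrank_weightPiece (hB : B.d = 0) (hφ : φ.IsQuasiIso)
    (hα : ∀ n, ∀ a ∈ A.grading n, φ.toFun (α.toFun a) = (2 : ℚ) ^ n • φ.toFun a)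
    (htop : ⨆ w, weightSpace α.toFun w = ⊤) [∀ n, FiniteDimensional ℚ (A.grading n)]
    (v : ℕ) (n : ℤ) :
    finrank ℚ (A.weightPiece α.toFun v (n + 1)) =
      finrank ℚ ((A.weightPiece α.toFun v (n + 1)).map A.d) +
        finrank ℚ ((A.weightPiece α.toFun v n).map A.d) +
          if n + 1 = v then finrank ℚ (B.grading v) else 0 := by
  have : FiniteDimensional ℚ (A.weightPiece α.toFun v (n + 1)) :=
    Submodule.finiteDimensional_inf_right _ _
  have rank_φ := finrank_map_add_finrank_inf_ker φ.toFun.toLinearMap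
    (A.weightPiece α.toFun v (n + 1) ⊓ LinearMap.ker A.d)
  rw [← hφ.map_d_weightPiece hB htop, hφ.map_weightPiece_inf_ker hB hα htop] at rank_φ
  rw [← finrank_map_add_finrank_inf_ker A.d, ← rank_φ]
  split_ifs with hn
  · rw [if_pos hn]
    abel
  · rw [if_neg hn, finrank_bot, zero_add, add_zero]

theorem CDGAHom.IsQuasiIso.sum_negOnePow_mul_finrank_weightPiece (hB : B.d = 0)
    (hφ : φ.IsQuasiIso)
    (hα : ∀ n, ∀ a ∈ A.grading n, φ.toFun (α.toFun a) = (2 : ℚ) ^ n • φ.toFun a)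
    (htop : ⨆ w, weightSpace α.toFun w = ⊤) [∀ n, FiniteDimensional ℚ (A.grading n)]
    {v N : ℕ} (hv : v ≤ N) (hN : A.weightPiece α.toFun v N = ⊥) :
    ∑ n ∈ Finset.range (N + 1), (-1 : ℤ) ^ n * finrank ℚ (A.weightPiece α.toFun v n) =
      (-1) ^ v * finrank ℚ (B.grading v) := by
  let rank (n : ℤ) : ℕ := finrank ℚ ((A.weightPiece α.toFun v n).map A.d)
  have rank_eq_zero {n : ℤ} (h : A.weightPiece α.toFun v n = ⊥) : (rank n : ℤ) = 0 := by
    simp only [rank]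
    rw [h, Submodule.map_bot, finrank_bot, Nat.cast_zero]
  refine sum_range_negOnePow_mul_of_eq_add (f := fun n => finrank ℚ (A.weightPiece α.toFun v n))
    (r := fun n => rank n) hv (fun n => ?_)
    (rank_eq_zero (eq_bot_iff.2 (inf_le_right.trans (A.nonneg _ (by norm_num)).le)))
    (rank_eq_zero hN)
  have finrank_eq := hφ.finrank_weightPiece hB hα htop v (n - 1)
  rw [sub_add_cancel] at finrank_eq
  exact_mod_cast finrank_eq

end Bigraded

section Exponents

variable {ι : Type} [Finite ι] (deg : ι → ℤ) {w : ι → ℕ} (hw : ∀ x, w x ≠ 0) (v : ℕ)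

/-- The exponents of the monomials of weight `v` in free graded-commutative generators of degrees
`deg` and weights `w`. -/
noncomputable def weightExponents : Finset (ι →₀ ℕ) :=
  open Classical in (Finsupp.finite_of_nat_weight_eq w hw v).toFinset.filter
    fun e => ∀ x, Odd (deg x) → e x ≤ 1

variable {deg v}

theorem mem_weightExponents {e : ι →₀ ℕ} :
    e ∈ weightExponents deg hw v ↔
      Finsupp.weight w e = v ∧ ∀ x, Odd (deg x) → e x ≤ 1 := by
  simp [weightExponents]

end Exponents

namespace CDGA.FreeOn

variable {A : CDGA} {ι : Type} [lo : LinearOrder ι] {deg : ι → ℤ} {g : ι → A.carrier}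
  {α : CDGAHom A A} {w : ι → ℕ}

theorem iSup_weightSpace (F : A.FreeOn deg g) (hg : ∀ x, g x ∈ weightSpace α.toFun (w x)) :
    ⨆ w, weightSpace α.toFun w = ⊤ := by
  refine top_le_iff.1 (F.top_le_span.trans (Submodule.span_le.2 ?_))
  rintro _ ⟨e, rfl⟩
  exact Submodule.mem_iSup_of_mem _ (monomialIn_mem_graded (weightSpace α.toFun) hg e.1)

theorem weightPiece_eq_span (F : A.FreeOn deg g) (hg : ∀ x, g x ∈ weightSpace α.toFun (w x))
    (v : ℕ) (n : ℤ) :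
    A.weightPiece α.toFun v n =
      Submodule.span ℚ ((fun e : AdmissibleExponent deg => monomialIn lo g e.1) ''
        {e | Finsupp.weight w e.1 = v ∧ Finsupp.weight deg e.1 = n}) := by
  have weight_mem (e : AdmissibleExponent deg) :=
    monomialIn_mem_graded (weightSpace α.toFun) hg e.1
  have degree_mem (e : AdmissibleExponent deg) :=
    monomialIn_mem_graded A.grading F.mem_grading e.1
  obtain ⟨π, -, hfix, hkill, -⟩ := exists_weight_projection (F.iSup_weightSpace hg) v
  refine le_antisymm ?_ (Submodule.span_le.2 ?_)
  · refine le_span_image_of_projection F.top_le_span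
      (p := π ∘ₗ GradedAlgebra.proj A.grading n) ?_ ?_ ?_
    · rintro e ⟨rfl, rfl⟩
      exact (congrArg π (proj_of_mem (degree_mem e))).trans (hfix _ (weight_mem e))
    · intro e he
      rw [LinearMap.comp_apply]
      obtain hn | hn := eq_or_ne (Finsupp.weight deg e.1) n
      · rw [proj_of_mem (hn ▸ degree_mem e)]
        exact hkill _ (fun hv => he ⟨hv, hn⟩) _ (weight_mem e)
      · rw [proj_of_mem_of_ne (degree_mem e) hn, map_zero]
    · rintro x ⟨hxv, hxn⟩
      exact (congrArg π (proj_of_mem hxn)).trans (hfix x hxv)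
  · rintro _ ⟨e, ⟨rfl, rfl⟩, rfl⟩
    exact ⟨weight_mem e, degree_mem e⟩

theorem finrank_weightPiece [Finite ι] (F : A.FreeOn deg g)
    (hg : ∀ x, g x ∈ weightSpace α.toFun (w x)) (hw : ∀ x, w x ≠ 0) (v : ℕ) (n : ℤ) :
    finrank ℚ (A.weightPiece α.toFun v n) =
      ((weightExponents deg hw v).filter fun e => Finsupp.weight deg e = n).card := by
  let s := (weightExponents deg hw v).filter fun e => Finsupp.weight deg e = n
  have admissible (e : s) : ∀ x, Odd (deg x) → e.1 x ≤ 1 :=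
    ((mem_weightExponents hw).1 (Finset.mem_filter.1 e.2).1).2
  have hrange : (fun e : AdmissibleExponent deg => monomialIn lo g e.1) ''
      {e | Finsupp.weight w e.1 = v ∧ Finsupp.weight deg e.1 = n} =
      Set.range fun e : s => monomialIn lo g e := by
    ext a
    simp [s, mem_weightExponents, and_comm]
  have independent : LinearIndependent ℚ fun e : s => monomialIn lo g e :=
    F.linearIndependent.comp (fun e : s => ⟨e, admissible e⟩) fun e e' h =>
      Subtype.ext (Subtype.mk.inj h)
  rw [F.weightPiece_eq_span hg, hrange, finrank_span_eq_card independent, Fintype.card_coe]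

theorem sum_weightExponents_negOnePow [Finite ι] (F : A.FreeOn deg g)
    (hg : ∀ x, g x ∈ weightSpace α.toFun (w x)) (hw : ∀ x, w x ≠ 0) {B : CDGA} {φ : CDGAHom A B}
    (hB : B.d = 0) (hφ : φ.IsQuasiIso)
    (hα : ∀ n, ∀ a ∈ A.grading n, φ.toFun (α.toFun a) = (2 : ℚ) ^ n • φ.toFun a) (v : ℕ) :
    ∑ e ∈ weightExponents deg hw v, ((Finsupp.weight deg e).negOnePow : ℤ) =
      (-1) ^ v * finrank ℚ (B.grading v) := by
  have deg_nonneg (e : ι →₀ ℕ) : 0 ≤ Finsupp.weight deg e :=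
    Finsupp.sum_nonneg fun x _ => nsmul_nonneg (by linarith [F.two_le_deg x]) _
  let N := max v ((weightExponents deg hw v).sup fun e => (Finsupp.weight deg e).toNat + 1)
  have deg_lt {e : ι →₀ ℕ} (he : e ∈ weightExponents deg hw v) : Finsupp.weight deg e < N := by
    have := (Finset.le_sup (f := fun e => (Finsupp.weight deg e).toNat + 1) he).trans
      (le_max_right v _)
    lia
  have := F.finiteDimensional_grading
  have hN : A.weightPiece α.toFun v N = ⊥ := by
    have : FiniteDimensional ℚ (A.weightPiece α.toFun v N) :=
      Submodule.finiteDimensional_inf_right _ _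
    rw [← Submodule.finrank_eq_zero (R := ℚ), F.finrank_weightPiece hg hw, Finset.card_eq_zero,
      Finset.filter_eq_empty_iff]
    exact fun e he => (deg_lt he).ne
  rw [← hφ.sum_negOnePow_mul_finrank_weightPiece hB hα (F.iSup_weightSpace hg)
    (le_max_left v _) hN,
    ← Finset.sum_fiberwise_of_maps_to (g := fun e => (Finsupp.weight deg e).toNat)
    (t := Finset.range (N + 1)) fun e he => Finset.mem_range.2 (by have := deg_lt he; lia)]
  refine Finset.sum_congr rfl fun n _ => ?_
  rw [F.finrank_weightPiece hg hw, mul_comm, ← nsmul_eq_mul, ← Finset.sum_const]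
  have hfilter : {e ∈ weightExponents deg hw v | (Finsupp.weight deg e).toNat = n} =
      {e ∈ weightExponents deg hw v | Finsupp.weight deg e = n} :=
    Finset.filter_congr fun e _ => by have := deg_nonneg e; lia
  rw [hfilter]
  refine Finset.sum_congr rfl fun e he => ?_
  rw [(Finset.mem_filter.1 he).2, Int.coe_negOnePow_natCast]

end CDGA.FreeOn

section GeneratingFunctions

open PowerSeries

theorem coeff_prod_expand {R ι : Type*} [CommRing R] [Fintype ι] {w : ι → ℕ} (hw : ∀ x, w x ≠ 0)
    (f : ι → R⟦X⟧) (v : ℕ) :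
    coeff v (∏ x, expand (w x) (hw x) (f x)) =
      ∑ e ∈ (Finsupp.finite_of_nat_weight_eq w hw v).toFinset, ∏ x, coeff (e x) (f x) := by
  classical
  rw [coeff_prod]
  refine (Finset.sum_of_injOn (fun e => Finsupp.equivFunOnFinite.symm fun x => w x * e x)
    ?_ ?_ ?_ ?_).symm
  · intro e _ e' _ h
    ext x
    exact mul_left_cancel₀ (hw x) (congrFun (Finsupp.equivFunOnFinite.symm.injective h) x)
  · intro e he
    simpa [Finsupp.weight_apply, Finsupp.sum_fintype, mul_comm] using he
  · intro f' hf' hnotMem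
    by_contra hne
    have hdvd (x : ι) : w x ∣ f' x := by
      by_contra hx
      exact hne (Finset.prod_eq_zero (Finset.mem_univ x) (coeff_expand_of_not_dvd _ _ _ hx))
    choose e he using hdvd
    refine hnotMem ⟨Finsupp.equivFunOnFinite.symm e, ?_, by ext x; simp [he]⟩
    simpa [Finsupp.weight_apply, Finsupp.sum_fintype, mul_comm, he] using hf'
  · exact fun e _ => Finset.prod_congr rfl fun x _ => (coeff_expand_mul _ _ _ _).symm

open Classical in
/-- The series `∑ (-1) ^ (k * n) X ^ k` over the exponents `k` that are admissible for a generator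
of degree `n`. -/
noncomputable def generatorSeries (n : ℤ) : ℤ⟦X⟧ := if Odd n then 1 - X else mk 1

open Classical in
theorem coeff_generatorSeries (n : ℤ) (k : ℕ) :
    coeff k (generatorSeries n) = if Odd n → k ≤ 1 then ((k • n).negOnePow : ℤ) else 0 := by
  rw [generatorSeries]
  by_cases hn : Odd n
  · rw [if_pos hn, map_sub, coeff_one, coeff_X]
    obtain rfl | rfl | hk : k = 0 ∨ k = 1 ∨ 1 < k := by lia
    · simp
    · simp [Int.negOnePow_odd n hn]
    · rw [if_neg (by lia), if_neg (by lia), if_neg fun h => hk.not_ge (h hn), sub_zero]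
  · rw [if_neg hn, if_pos fun h => absurd h hn, nsmul_eq_mul,
      Int.negOnePow_even _ ((Int.not_odd_iff_even.1 hn).mul_left _), coeff_mk, Pi.one_apply,
      Units.val_one]

theorem coe_negOnePow_weight {ι : Type*} [Fintype ι] (deg : ι → ℤ) (e : ι →₀ ℕ) :
    ((Finsupp.weight deg e).negOnePow : ℤ) = ∏ x, ((e x • deg x).negOnePow : ℤ) := by
  rw [Finsupp.weight_apply, Finsupp.sum_fintype _ _ (by simp)]
  induction (Finset.univ : Finset ι) using Finset.cons_induction with
  | empty => simp
  | cons x s hx ih =>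
    rw [Finset.sum_cons, Finset.prod_cons, Int.negOnePow_add, Units.val_mul, ih]

theorem coeff_prod_expand_generatorSeries {ι : Type} [Fintype ι] (deg : ι → ℤ) {w : ι → ℕ}
    (hw : ∀ x, w x ≠ 0) (v : ℕ) :
    coeff v (∏ x, expand (w x) (hw x) (generatorSeries (deg x))) =
      ∑ e ∈ weightExponents deg hw v, ((Finsupp.weight deg e).negOnePow : ℤ) := by
  classical
  rw [coeff_prod_expand, weightExponents, Finset.sum_filter]
  refine Finset.sum_congr (by rfl) fun e _ => ?_
  simp only [coeff_generatorSeries, coe_negOnePow_weight]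
  rw [Finset.prod_ite_zero]
  simp

theorem prod_expand_generatorSeries_mul {ι : Type*} [Fintype ι] (deg : ι → ℤ) {w : ι → ℕ}
    (hw : ∀ x, w x ≠ 0) :
    (∏ x, expand (w x) (hw x) (generatorSeries (deg x))) * ∏ x with Even (deg x), (1 - X ^ w x) =
      ∏ x with Odd (deg x), (1 - X ^ w x) := by
  classical
  rw [Finset.prod_filter, Finset.prod_filter, ← Finset.prod_mul_distrib]
  refine Finset.prod_congr rfl fun x _ => ?_
  have hX : 1 - X ^ w x = expand (w x) (hw x) (1 - X : ℤ⟦X⟧) := by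
    rw [map_sub, map_one, expand_X]
  rw [generatorSeries, hX]
  obtain h | h := Int.even_or_odd (deg x)
  · rw [if_pos h, if_neg (Int.not_odd_iff_even.2 h), if_neg (Int.not_odd_iff_even.2 h), ← map_mul,
      mk_one_mul_one_sub_eq_one, map_one]
  · rw [if_neg (Int.not_even_iff_odd.2 h), if_pos h, if_pos h, mul_one]

end GeneratingFunctions

section Divisibility

open Polynomial

variable {R : Type*} [CommRing R] [IsDomain R] [CharZero R]

theorem one_sub_X_pow_dvd_of_mul_prod_eq {ι : Type*} {s t : Finset ι} {w : ι → ℕ}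
    (hw : ∀ x ∈ t, w x ≠ 0) {F : R[X]}
    (hF : F * ∏ x ∈ t, (1 - X ^ w x) = ∏ x ∈ s, (1 - X ^ w x)) :
    (1 - X) ^ (s.card - t.card) ∣ F := by
  let geom (n : ℕ) : R[X] := ∑ i ∈ Finset.range n, X ^ i
  have prod_eq (u : Finset ι) :
      ∏ x ∈ u, (1 - X ^ w x : R[X]) = (1 - X) ^ u.card * ∏ x ∈ u, geom (w x) := by
    rw [← Finset.prod_const, ← Finset.prod_mul_distrib]
    exact Finset.prod_congr rfl fun x _ => (mul_neg_geom_sum X (w x)).symm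
  have prime : Prime (1 - X : R[X]) := by
    simpa using (prime_X_sub_C (1 : R)).neg
  have not_dvd : ¬ (1 - X : R[X]) ∣ ∏ x ∈ t, geom (w x) := by
    intro h
    obtain ⟨x, hx, hdvd⟩ := prime.exists_mem_finset_dvd h
    have := eval_dvd (x := 1) hdvd
    simp [geom, eval_finsetSum, hw x hx] at this
  have hdvd : (1 - X) ^ s.card ∣ F * (1 - X) ^ t.card := by
    refine prime.pow_dvd_of_dvd_mul_right _ not_dvd ?_
    rw [mul_assoc, ← prod_eq, hF, prod_eq]
    exact dvd_mul_right _ _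
  obtain hle | hlt := le_total t.card s.card
  · rw [← Nat.sub_add_cancel hle, pow_add] at hdvd
    exact (mul_dvd_mul_iff_right (pow_ne_zero _ prime.ne_zero)).1 hdvd
  · rw [Nat.sub_eq_zero_of_le hlt, pow_zero]
    exact one_dvd F

end Divisibility

theorem finrank_eq_sum_of_isInternal {K V ι : Type*} [DecidableEq ι] [Field K] [AddCommGroup V]
    [Module K V] [FiniteDimensional K V] {N : ι → Submodule K V} (hN : DirectSum.IsInternal N)
    {s : Finset ι} (hs : ∀ i, N i ≠ ⊥ → i ∈ s) : finrank K V = ∑ i ∈ s, finrank K (N i) := by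
  let t := (Submodule.finite_ne_bot_of_iSupIndep hN.submodule_iSupIndep).toFinset
  have mem_t {i : ι} : i ∈ t ↔ N i ≠ ⊥ := Set.Finite.mem_toFinset _
  have hts : t ⊆ s := fun i hi => hs i (mem_t.1 hi)
  let _ : Fintype {i // N i ≠ ⊥} := Fintype.subtype t fun i => mem_t
  let equiv := LinearEquiv.ofBijective
    (DirectSum.coeLinearMap fun i : {i // N i ≠ ⊥} => N i) (DirectSum.isInternal_ne_bot_iff.2 hN)
  rw [← equiv.finrank_eq, Module.finrank_directSum, ← Finset.sum_subset hts fun i _ hi => by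
      rw [not_not.1 (mt mem_t.2 hi), finrank_bot]]
  exact (Finset.sum_subtype t (fun i => mem_t) fun i => finrank K (N i)).symm

namespace CDGA

theorem exists_finrank_eq_sum_range (B : CDGA) [FiniteDimensional ℚ B.carrier] :
    ∃ m : ℕ, (∀ v : ℕ, m ≤ v → finrank ℚ (B.grading v) = 0) ∧
      finrank ℚ B.carrier = ∑ v ∈ Finset.range m, finrank ℚ (B.grading v) := by
  obtain ⟨N, hN⟩ := (Submodule.finite_ne_bot_of_iSupIndep
    B.internal.submodule_iSupIndep).bddAbove
  have lt_of_ne_bot {n : ℤ} (hn : B.grading n ≠ ⊥) : 0 ≤ n ∧ n < N.toNat + 1 := by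
    have := hN hn
    have := not_lt.1 (mt (B.nonneg n) hn)
    lia
  refine ⟨N.toNat + 1, fun v hv => ?_, ?_⟩
  · rw [Submodule.finrank_eq_zero]
    by_contra h
    have := lt_of_ne_bot h
    lia
  · rw [finrank_eq_sum_of_isInternal B.internal
      (s := (Finset.range (N.toNat + 1)).map Nat.castEmbedding), Finset.sum_map]
    · rfl
    · intro n hn
      have := lt_of_ne_bot hn
      exact Finset.mem_map.2 ⟨n.toNat, Finset.mem_range.2 (by lia), Int.toNat_of_nonneg this.1⟩

theorem one_notMem_range_d (A : CDGA) [Nontrivial A.carrier] :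
    (1 : A.carrier) ∉ LinearMap.range A.d := by
  intro h
  obtain ⟨y, hy, hdy⟩ := exists_mem_grading_d_eq (n := -1) (by simpa using A.one_mem) h
  rw [A.nonneg _ (by norm_num), Submodule.mem_bot] at hy
  rw [hy, map_zero] at hdy
  exact zero_ne_one hdy

instance (A : CDGA) [Nontrivial A.carrier] : Nontrivial A.Hspace := by
  refine Submodule.Quotient.nontrivial_iff.2 fun h => A.one_notMem_range_d ?_
  have : (⟨1, A.isPreCDGA.d_one⟩ : LinearMap.ker A.d) ∈
      (LinearMap.range A.d).comap (LinearMap.ker A.d).subtype := h ▸ Submodule.mem_top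
  exact this

end CDGA

theorem CDGAHom.IsQuasiIso.nonempty_Hspace_equiv {A B : CDGA} {φ : CDGAHom A B}
    (hφ : φ.IsQuasiIso) (hB : B.d = 0) : Nonempty (A.Hspace ≃ₗ[ℚ] B.carrier) := by
  let f : LinearMap.ker A.d →ₗ[ℚ] B.carrier := φ.toFun.toLinearMap.domRestrict _
  have mem_range_d {y : B.carrier} : y ∈ LinearMap.range B.d ↔ y = 0 := by
    rw [hB, LinearMap.range_zero, Submodule.mem_bot]
  have surjective : Function.Surjective f := by
    intro y
    obtain ⟨x, hx, hxy⟩ := hφ.2 y (by rw [hB, LinearMap.zero_apply])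
    exact ⟨⟨x, hx⟩, sub_eq_zero.1 (mem_range_d.1 hxy)⟩
  have ker_eq : (LinearMap.range A.d).comap (LinearMap.ker A.d).subtype = LinearMap.ker f := by
    ext x
    refine ⟨?_, fun hx => hφ.1 x x.2 (mem_range_d.2 hx)⟩
    rintro ⟨y, hy⟩
    exact mem_range_d.1 ⟨φ.toFun y, (φ.comm_d y).symm.trans (congrArg φ.toFun hy)⟩
  exact ⟨(Submodule.quotEquivOfEq _ _ ker_eq).trans (f.quotKerEquivOfSurjective surjective)⟩

section PoincarePolynomial

open Polynomial

theorem two_pow_dvd_eval_neg_one {ι : Type*} [Fintype ι] (deg : ι → ℤ) {w : ι → ℕ}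
    (hw : ∀ x, w x ≠ 0) {F : ℤ[X]}
    (hF : (F : PowerSeries ℤ) =
      ∏ x, PowerSeries.expand (w x) (hw x) (generatorSeries (deg x))) :
    (2 : ℤ) ^ (Finset.card {x | Odd (deg x)} - Finset.card {x | Even (deg x)}) ∣ F.eval (-1) := by
  have coe_prod (s : Finset ι) : ((∏ x ∈ s, (1 - X ^ w x) : ℤ[X]) : PowerSeries ℤ) =
      ∏ x ∈ s, (1 - PowerSeries.X ^ w x) := by
    rw [← coeToPowerSeries.ringHom_apply, map_prod]
    simp
  have product : F * ∏ x with Even (deg x), (1 - X ^ w x) =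
      ∏ x with Odd (deg x), (1 - X ^ w x) := by
    apply coe_injective ℤ
    rw [coe_mul, coe_prod, coe_prod, hF, prod_expand_generatorSeries_mul]
  have := eval_dvd (x := -1) (one_sub_X_pow_dvd_of_mul_prod_eq (fun x _ => hw x) product)
  simpa [one_add_one_eq_two] using this

end PoincarePolynomial

theorem CDGA.FreeOn.two_pow_dvd_finrank_Hspace {A : CDGA} {ι : Type} [Fintype ι]
    [lo : LinearOrder ι] {deg : ι → ℤ} {g : ι → A.carrier} (F : A.FreeOn deg g)
    (hdec : ∀ x, A.d (g x) ∈ A.decomposables) (hA : A.IsFormal) [FiniteDimensional ℚ A.Hspace] :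
    2 ^ (Finset.card {x | Odd (deg x)} - Finset.card {x | Even (deg x)}) ∣
      finrank ℚ A.Hspace := by
  obtain ⟨B, φ, hB, hφ⟩ := F.exists_quasiIso_of_isFormal hdec hA
  obtain ⟨α, hα⟩ := F.exists_gradingEndomorphism hdec hB hφ (two_ne_zero (α := ℚ))
  obtain ⟨g', w, F', hw, hg'⟩ := F.exists_weight_generators hdec hφ hα
  obtain ⟨equiv⟩ := hφ.nonempty_Hspace_equiv hB
  have : FiniteDimensional ℚ B.carrier := equiv.finiteDimensional
  obtain ⟨m, hm, finrank_B⟩ := B.exists_finrank_eq_sum_range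
  let P : Polynomial ℤ := PowerSeries.trunc m
    (PowerSeries.mk fun v => (-1) ^ v * (finrank ℚ (B.grading v) : ℤ))
  have P_eq : (P : PowerSeries ℤ) =
      ∏ x, PowerSeries.expand (w x) (hw x).ne' (generatorSeries (deg x)) := by
    ext v
    rw [coeff_prod_expand_generatorSeries, F'.sum_weightExponents_negOnePow hg' _ hB hφ hα,
      Polynomial.coeff_coe, PowerSeries.coeff_trunc, PowerSeries.coeff_mk]
    split_ifs with hv
    · rfl
    · rw [hm v (not_lt.1 hv), Nat.cast_zero, mul_zero]
  have eval_P : P.eval (-1) = finrank ℚ A.Hspace := by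
    rw [equiv.finrank_eq, finrank_B, ← Polynomial.eval₂_id, PowerSeries.eval₂_trunc_eq_sum_range,
      Nat.cast_sum]
    refine Finset.sum_congr rfl fun v _ => ?_
    rw [PowerSeries.coeff_mk, RingHom.id_apply, mul_right_comm, ← mul_pow, neg_one_mul, neg_neg,
      one_pow, one_mul]
  have := two_pow_dvd_eval_neg_one deg (fun x => (hw x).ne') P_eq
  rw [eval_P] at this
  exact_mod_cast this

section Generators

variable {ι : Type} {deg : ι → ℤ}

theorem linearIndependent_of_linearIndependent_monomialIn {R : Type} [Ring R] [Algebra ℚ R]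
    [lo : LinearOrder ι] {g : ι → R}
    (h : LinearIndependent ℚ fun e : AdmissibleExponent deg => monomialIn lo g e.1) :
    LinearIndependent ℚ g := by
  have admissible (x y : ι) : Finsupp.single x 1 y ≤ 1 := by
    rw [Finsupp.single_apply]
    split_ifs <;> simp
  have := h.comp (fun x => ⟨Finsupp.single x 1, fun y _ => admissible x y⟩) fun x y hxy =>
    Finsupp.single_left_injective one_ne_zero (Subtype.mk.inj hxy)
  simpa only [Function.comp_def, monomialIn_single_one] using this

theorem CDGA.FreeOn.nontrivial {A : CDGA} [lo : LinearOrder ι] {g : ι → A.carrier}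
    (F : A.FreeOn deg g) : Nontrivial A.carrier := by
  have := F.linearIndependent.ne_zero ⟨0, fun _ _ => zero_le_one⟩
  rw [monomialIn_zero] at this
  exact nontrivial_of_ne _ _ this

theorem finsum_ite_finrank_span_fiber {K M κ : Type*} [Field K] [AddCommGroup M] [Module K M]
    [Fintype ι] {d : ι → κ} {g : ι → M} (hg : LinearIndependent K g)
    {V : κ → Submodule K M} (hV : ∀ i, V i = Submodule.span K (g '' {x | d x = i}))
    (P : κ → Prop) [DecidablePred P] :
    (∑ᶠ i, if P i then finrank K (V i) else 0) = Finset.card {x | P (d x)} := by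
  classical
  have finrank_V (i : κ) : finrank K (V i) = Finset.card {x | d x = i} := by
    rw [hV, Set.image_eq_range]
    exact (finrank_span_eq_card (hg.comp _ Subtype.val_injective)).trans (Fintype.card_subtype _)
  have support_subset : (Function.support fun i => if P i then finrank K (V i) else 0) ⊆
      (Finset.univ.image d : Finset κ) := by
    intro i hi
    have := (ite_ne_right_iff.1 hi).2
    rw [finrank_V, Finset.card_ne_zero] at this
    obtain ⟨x, hx⟩ := this
    exact Finset.mem_coe.2
      (Finset.mem_image.2 ⟨x, Finset.mem_univ x, (Finset.mem_filter.1 hx).2⟩)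
  rw [finsum_eq_sum_of_support_subset _ support_subset, Finset.card_filter,
    ← Finset.sum_fiberwise_of_maps_to fun x _ => Finset.mem_image_of_mem d (Finset.mem_univ x)]
  refine Finset.sum_congr rfl fun i _ => ?_
  rw [finrank_V, Finset.sum_congr rfl fun x hx => by rw [(Finset.mem_filter.1 hx).2],
    Finset.sum_const, smul_eq_mul, mul_ite, mul_one, mul_zero]

end Generators

namespace SullivanAlgebra

theorem exists_freeOn (A : SullivanAlgebra) :
    ∃ (ι : Type) (_ : LinearOrder ι) (deg : ι → ℤ) (g : ι → A.carrier),
      A.toCDGA.FreeOn deg g ∧ LinearIndependent ℚ g ∧ (∀ x, g x ∈ A.V (deg x)) ∧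
        ∀ i, A.V i = Submodule.span ℚ (g '' {x | deg x = i}) := by
  obtain ⟨ι, lo, deg, g, mem_V, V_eq, independent, spanning⟩ := A.free
  have hg := linearIndependent_of_linearIndependent_monomialIn independent
  have two_le_deg (x : ι) : 2 ≤ deg x := by
    by_contra h
    have := mem_V x
    rw [A.V_lower (deg x) (by lia), Submodule.mem_bot] at this
    exact hg.ne_zero x this
  exact ⟨ι, lo, deg, g, ⟨two_le_deg, fun x => A.V_le _ (mem_V x), independent, spanning⟩, hg,
    mem_V, V_eq⟩

theorem finite_generators (A : SullivanAlgebra) {N : ℤ} (hN : ∀ i, N ≤ i → A.V i = ⊥) {ι : Type}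
    {deg : ι → ℤ} {g : ι → A.carrier} (hg : LinearIndependent ℚ g)
    (mem_V : ∀ x, g x ∈ A.V (deg x)) : Finite ι := by
  have deg_mem (x : ι) : deg x ∈ Set.Icc 2 N := by
    have ne_bot : A.V (deg x) ≠ ⊥ := fun h => hg.ne_zero x ((Submodule.mem_bot ℚ).1 (h ▸ mem_V x))
    have := mt (hN (deg x)) ne_bot
    have := mt (A.V_lower (deg x)) ne_bot
    exact ⟨by lia, by lia⟩
  let W : Submodule ℚ A.carrier := ⨆ i : Set.Icc 2 N, A.V i
  have := A.V_findim
  have mem_W (x : ι) : g x ∈ W :=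
    Submodule.mem_iSup_of_mem (p := fun i : Set.Icc 2 N => A.V i) ⟨deg x, deg_mem x⟩ (mem_V x)
  have : LinearIndependent ℚ fun x => (⟨g x, mem_W x⟩ : W) := .of_comp W.subtype hg
  exact this.finite

theorem finrank_Hspace_pos (A : SullivanAlgebra)
    [FiniteDimensional ℚ A.toCDGA.Hspace] : 0 < finrank ℚ A.toCDGA.Hspace := by
  obtain ⟨ι, _, deg, g, F, -⟩ := A.exists_freeOn
  have := F.nontrivial
  exact Module.finrank_pos

end SullivanAlgebra

theorem formal_elliptic_trc_general (A : SullivanAlgebra)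
    (hmin : A.IsMinimal) (hell : A.Elliptic) (hformal : A.toCDGA.IsFormal) :
    2 ^ (A.oddDim - A.evenDim) ∣ finrank ℚ A.toCDGA.Hspace := by
  obtain ⟨⟨N, hN⟩, _⟩ := hell
  obtain ⟨ι, _, deg, g, F, hg, mem_V, V_eq⟩ := A.exists_freeOn
  have := A.finite_generators hN hg mem_V
  have := Fintype.ofFinite ι
  rw [SullivanAlgebra.oddDim, SullivanAlgebra.evenDim, finsum_ite_finrank_span_fiber hg V_eq,
    finsum_ite_finrank_span_fiber hg V_eq]
  exact F.two_pow_dvd_finrank_Hspace (fun x => hmin _ _ (mem_V x)) hformal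

/-- **The toral rank conjecture for formal elliptic spaces** (Corollary 5.3,
after Kotani–Yamaguchi): if `(ΛV, d)` is a formal elliptic minimal Sullivan
algebra over `ℚ`, then `dim_ℚ H^*(ΛV, d) ≥ 2^(dim V^odd - dim V^even)`. -/
theorem formal_elliptic_trc (A : SullivanAlgebra)
    (hmin : A.IsMinimal) (hell : A.Elliptic) (hformal : A.toCDGA.IsFormal) :
    2 ^ (A.oddDim - A.evenDim) ≤ Module.finrank ℚ A.toCDGA.Hspace :=
  have := hell.2
  Nat.le_of_dvd A.finrank_Hspace_pos (formal_elliptic_trc_general A hmin hell hformal)
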